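/- Let δ ≥ 1 and a ≥ 1 be integers with gcd(a, δ) = 1. Then there exists x₀ depending only on δ such that for all real x ≥ x₀, x²/(2 φ(δ) log x) ≤ Σ_{p prime, p ≡ a (mod δ), p < x} p ≤ x²/(φ(δ) log x), where φ is Euler's totient function. -/

import Mathlib

/-- The sum of the primes `p < x` with `p ≡ a (mod δ)`. -/
noncomputable def primeSumBelowMod (x : ℝ) (a δ : ℕ) : ℝ :=
  ∑ p ∈ (Finset.range ⌈x⌉₊).filter (fun p => Nat.Prime p ∧ p % δ = a % δ), (p : ℝ)

namespace PSB
open Complex Filter Topology MeasureTheory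

lemma partial_sum_bdd {q : ℕ} [NeZero q] (χ : DirichletCharacter ℂ q) :
    ∃ m : ℂ, ∃ B : ℝ, 0 ≤ B ∧ ∀ n : ℕ, ‖∑ k ∈ Finset.Icc 1 n, χ k - m * n‖ ≤ B := by
  set S : ℕ → ℂ := fun n => ∑ k ∈ Finset.Icc 1 n, χ k with hS
  have hsucc (n : ℕ) : S (n + 1) = S n + χ ((n + 1 : ℕ)) := by
    simp only [hS]
    rw [Finset.sum_Icc_succ_top (by omega)]
  have h1 (n : ℕ) : S (n + q) = S n + S q := by
    induction n with
    | zero => simp [hS]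
    | succ n ih =>
      rw [show n + 1 + q = n + q + 1 by ring, hsucc, hsucc, ih]
      have : ((n + q + 1 : ℕ) : ZMod q) = ((n + 1 : ℕ) : ZMod q) := by simp
      rw [this]; ring
  have hq : (q : ℂ) ≠ 0 := by exact_mod_cast NeZero.ne q
  have hper : Function.Periodic (fun n : ℕ => S n - S q / q * n) q := by
    intro n
    simp only [h1]
    push_cast
    field_simp
    ring
  refine ⟨S q / q, ∑ i ∈ Finset.range q, ‖S i - S q / q * i‖,
    Finset.sum_nonneg fun _ _ => norm_nonneg _, fun n => ?_⟩
  have := hper.map_mod_nat n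
  rw [← this]
  exact Finset.single_le_sum (f := fun i : ℕ => ‖S i - S q / q * i‖) (fun _ _ => norm_nonneg _)
    (Finset.mem_range.mpr (Nat.mod_lt _ (NeZero.pos q)))

/-- remainder function -/
noncomputable def RN (χ : ℕ → ℂ) (m : ℂ) (N : ℕ) (t : ℝ) : ℂ :=
  if t ≤ N then 0 else ((∑ k ∈ Finset.Icc 1 ⌊t⌋₊, if k ≤ N then 0 else χ k) - m * (t - N))

lemma RN_bdd {χ : ℕ → ℂ} {m : ℂ} {B : ℝ} (hB : 0 ≤ B)
    (h : ∀ n : ℕ, ‖∑ k ∈ Finset.Icc 1 n, χ k - m * n‖ ≤ B) (N : ℕ) (t : ℝ) :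
    ‖RN χ m N t‖ ≤ 2 * B + ‖m‖ := by
  unfold RN
  split_ifs with ht
  · simp; positivity
  push Not at ht
  have ht0 : 0 ≤ t := le_trans (Nat.cast_nonneg _) ht.le
  have hN : N ≤ ⌊t⌋₊ := Nat.le_floor ht.le
  have e : (∑ k ∈ Finset.Icc 1 ⌊t⌋₊, if k ≤ N then 0 else χ k)
      = ∑ k ∈ Finset.Icc 1 ⌊t⌋₊, χ k - ∑ k ∈ Finset.Icc 1 N, χ k := by
    rw [eq_sub_iff_add_eq]
    have : ∑ k ∈ Finset.Icc 1 N, χ k = ∑ k ∈ Finset.Icc 1 ⌊t⌋₊, if k ≤ N then χ k else 0 := by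
      rw [← Finset.sum_filter]
      congr 1
      ext k; simp; omega
    rw [this, ← Finset.sum_add_distrib]
    refine Finset.sum_congr rfl fun k _ => ?_
    split_ifs <;> simp
  rw [e]
  have e2 : ∑ k ∈ Finset.Icc 1 ⌊t⌋₊, χ k - ∑ k ∈ Finset.Icc 1 N, χ k - m * (t - N)
      = (∑ k ∈ Finset.Icc 1 ⌊t⌋₊, χ k - m * (⌊t⌋₊ : ℕ)) - (∑ k ∈ Finset.Icc 1 N, χ k - m * N)
        - m * ((t - ⌊t⌋₊ : ℝ) : ℂ) := by push_cast; ring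
  rw [e2]
  have h3 : ‖m * ((t - ⌊t⌋₊ : ℝ) : ℂ)‖ ≤ ‖m‖ := by
    rw [norm_mul, Complex.norm_real, Real.norm_eq_abs, abs_of_nonneg (by linarith [Nat.floor_le ht0])]
    have := Nat.lt_floor_add_one t
    exact mul_le_of_le_one_right (norm_nonneg _) (by linarith)
  calc _ ≤ ‖(∑ k ∈ Finset.Icc 1 ⌊t⌋₊, χ k - m * (⌊t⌋₊ : ℕ)) - (∑ k ∈ Finset.Icc 1 N, χ k - m * N)‖
        + ‖m * ((t - ⌊t⌋₊ : ℝ) : ℂ)‖ := norm_sub_le _ _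
    _ ≤ (‖∑ k ∈ Finset.Icc 1 ⌊t⌋₊, χ k - m * (⌊t⌋₊ : ℕ)‖ + ‖∑ k ∈ Finset.Icc 1 N, χ k - m * N‖)
        + ‖m‖ := add_le_add (norm_sub_le _ _) h3
    _ ≤ _ := by linarith [h ⌊t⌋₊, h N]

lemma RN_meas (χ : ℕ → ℂ) (m : ℂ) (N : ℕ) : Measurable (RN χ m N) := by
  unfold RN
  refine Measurable.ite measurableSet_Iic measurable_const ?_
  refine Measurable.sub ?_ (by fun_prop)
  have : Measurable (fun n : ℕ => ∑ k ∈ Finset.Icc 1 n, if k ≤ N then (0 : ℂ) else χ k) :=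
    measurable_from_nat
  exact this.comp Nat.measurable_floor

/-- the remainder integral -/
noncomputable def JN (χ : ℕ → ℂ) (m : ℂ) (N : ℕ) (s : ℂ) : ℂ :=
  ∫ t in Set.Ioi (N : ℝ), RN χ m N t * (t : ℂ) ^ (-(s + 1))

lemma JN_diff {χ : ℕ → ℂ} {m : ℂ} {B : ℝ} (hB : ∀ N t, ‖RN χ m N t‖ ≤ B) {N : ℕ} (hN : 1 ≤ N)
    {s : ℂ} (hs : 0 < s.re) : DifferentiableAt ℂ (JN χ m N) s := by
  have hN0 : (0 : ℝ) < N := by exact_mod_cast hN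
  have e : JN χ m N = fun s => mellin (RN χ m N) (-s) := by
    funext s
    unfold JN mellin
    have : ∀ t ∈ Set.Ioi (0 : ℝ), (t : ℂ) ^ (-s - 1) • RN χ m N t
      = (Set.Ioi (N : ℝ)).indicator (fun t : ℝ => RN χ m N t * (t : ℂ) ^ (-(s + 1))) t := by
      intro t _
      by_cases h : t ∈ Set.Ioi (N : ℝ)
      · rw [Set.indicator_of_mem h, smul_eq_mul, mul_comm]; congr 2; ring
      · rw [Set.indicator_of_notMem h]
        have : RN χ m N t = 0 := by unfold RN; rw [if_pos (by simpa using h)]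
        simp [this]
    rw [setIntegral_congr_fun measurableSet_Ioi this, setIntegral_indicator measurableSet_Ioi,
      Set.inter_eq_self_of_subset_right (Set.Ioi_subset_Ioi hN0.le)]
  rw [e]
  have : DifferentiableAt ℂ (mellin (RN χ m N)) (-s) := by
    refine mellin_differentiableAt_of_isBigO_rpow (a := 0) (b := (-s).re - 1) ?_ ?_ (by simpa using hs) ?_ (by linarith)
    · refine LocallyIntegrable.locallyIntegrableOn ?_ _
      refine (locallyIntegrable_const B).mono (RN_meas χ m N).aestronglyMeasurable ?_
      refine Eventually.of_forall fun t => ?_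
      exact (hB N t).trans (le_abs_self _)
    · simp only [neg_zero, Real.rpow_zero]
      exact Asymptotics.IsBigO.of_bound B (Eventually.of_forall fun t => by simpa using hB N t)
    · refine Asymptotics.IsBigO.of_bound 1 ?_
      have : ∀ᶠ t : ℝ in 𝓝[>] 0, t < N := (eventually_lt_nhds hN0).filter_mono nhdsWithin_le_nhds
      filter_upwards [this] with t ht
      have : RN χ m N t = 0 := by unfold RN; rw [if_pos ht.le]
      rw [this]; simp
  exact this.comp s differentiableAt_id.neg

lemma JN_bdd {χ : ℕ → ℂ} {m : ℂ} {B : ℝ} (hB : ∀ N t, ‖RN χ m N t‖ ≤ B) {N : ℕ} (hN : 1 ≤ N)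
    {s : ℂ} (hs : 0 < s.re) : ‖JN χ m N s‖ ≤ B * ((N : ℝ) ^ (-s.re) / s.re) := by
  have hN0 : (0 : ℝ) < N := by exact_mod_cast hN
  have := integral_Ioi_rpow_of_lt (a := -(s.re + 1)) (by linarith) hN0
  have e : B * ((N : ℝ) ^ (-s.re) / s.re) = ∫ t in Set.Ioi (N : ℝ), B * t ^ (-(s.re + 1)) := by
    rw [integral_const_mul, this]
    congr 1
    rw [show -(s.re + 1) + 1 = -s.re by ring, neg_div_neg_eq]
  rw [e]
  unfold JN
  refine norm_integral_le_of_norm_le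
    ((integrableOn_Ioi_rpow_of_lt (by linarith) hN0).const_mul B) ?_
  refine (ae_restrict_iff' measurableSet_Ioi).mpr (Eventually.of_forall fun t ht => ?_)
  have ht0 : 0 < t := hN0.trans ht
  rw [norm_mul, Complex.norm_cpow_eq_rpow_re_of_pos ht0]
  have : (-(s + 1)).re = -(s.re + 1) := by simp
  rw [this]
  gcongr
  exact hB N t

end PSB

namespace PSB
open Complex Filter Topology MeasureTheory

lemma LFunction_trunc_right {q : ℕ} [NeZero q] (χ : DirichletCharacter ℂ q) {m : ℂ} {B : ℝ}
    (hB : ∀ N t, ‖RN (fun n => χ n) m N t‖ ≤ B) {N : ℕ} (hN : 1 ≤ N) {s : ℂ} (hs : 1 < s.re) :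
    DirichletCharacter.LFunction χ s =
      ∑ n ∈ Finset.Icc 1 N, χ n * (n : ℂ) ^ (-s) + m * (N : ℂ) ^ (1 - s) / (s - 1)
        + s * JN (fun n => χ n) m N s := by
  have hN0 : (0 : ℝ) < N := by exact_mod_cast hN
  have hs1 : s - 1 ≠ 0 := by
    intro h; rw [sub_eq_zero] at h; rw [h] at hs; simp at hs
  have hs0 : s ≠ 0 := by
    intro h; rw [h] at hs; simp at hs; linarith
  rw [DirichletCharacter.LFunction_eq_LSeries χ hs]
  set f : ℕ → ℂ := fun k => if k ≤ N then 0 else χ k with hf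
  set g : ℕ → ℂ := fun k => if k ≤ N then χ k else 0 with hg
  have hfs : LSeriesSummable f s := by
    refine LSeriesSummable_of_bounded_of_one_lt_re (m := 1) (fun n _ => ?_) hs
    simp only [hf]
    split_ifs
    · simp
    · exact χ.norm_le_one _
  have hgs : LSeriesSummable g s := by
    refine LSeriesSummable_of_bounded_of_one_lt_re (m := 1) (fun n _ => ?_) hs
    simp only [hg]
    split_ifs
    · exact χ.norm_le_one _
    · simp
  have e1 : LSeries (fun n => χ n) s = LSeries g s + LSeries f s := by
    rw [← LSeries_add hgs hfs]
    congr 1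
    funext n
    simp only [hf, hg, Pi.add_apply]
    split_ifs <;> simp
  have e2 : LSeries g s = ∑ n ∈ Finset.Icc 1 N, χ n * (n : ℂ) ^ (-s) := by
    unfold LSeries
    rw [tsum_eq_sum (s := Finset.Icc 1 N)]
    · refine Finset.sum_congr rfl fun n hn => ?_
      rw [Finset.mem_Icc] at hn
      rw [LSeries.term_of_ne_zero (by omega), Complex.cpow_neg, div_eq_mul_inv]
      simp only [hg]
      rw [if_pos hn.2]
    · intro n hn
      rcases Nat.eq_zero_or_pos n with rfl | h0
      · simp
      · rw [LSeries.term_of_ne_zero (by omega)]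
        simp only [hg]
        rw [if_neg (by intro h; exact hn (Finset.mem_Icc.mpr ⟨h0, h⟩))]
        simp
  have e3 : LSeries f s = s * ∫ t in Set.Ioi (1 : ℝ), (∑ k ∈ Finset.Icc 1 ⌊t⌋₊, f k) * t ^ (-(s + 1)) := by
    refine LSeries_eq_mul_integral f (r := 1) zero_le_one hs hfs ?_
    refine Asymptotics.IsBigO.of_bound 1 (Eventually.of_forall fun n => ?_)
    simp only [Real.rpow_one, one_mul]
    refine (norm_sum_le _ _).trans ?_
    calc ∑ k ∈ Finset.Icc 1 n, ‖f k‖ ≤ ∑ k ∈ Finset.Icc 1 n, 1 := by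
          refine Finset.sum_le_sum fun k _ => ?_
          simp only [hf]
          split_ifs
          · simp
          · exact χ.norm_le_one _
      _ = ‖(n : ℝ)‖ := by simp
  have e4 : ∀ t ∈ Set.Ioi (1 : ℝ), (∑ k ∈ Finset.Icc 1 ⌊t⌋₊, f k) * (t : ℂ) ^ (-(s + 1))
      = (Set.Ioi (N : ℝ)).indicator (fun t : ℝ => RN (fun n => χ n) m N t * (t : ℂ) ^ (-(s + 1))
        + (m * (t : ℂ) ^ (-s) - m * N * (t : ℂ) ^ (-(s + 1)))) t := by
    intro t ht
    have ht0 : (t : ℂ) ≠ 0 := by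
      have : (0 : ℝ) < t := lt_trans zero_lt_one ht
      exact_mod_cast this.ne'
    by_cases h : t ∈ Set.Ioi (N : ℝ)
    · rw [Set.indicator_of_mem h]
      unfold RN
      rw [if_neg (by simpa using h)]
      have : (t : ℂ) ^ (-s) = t * (t : ℂ) ^ (-(s + 1)) := by
        rw [show -s = 1 + -(s + 1) by ring, Complex.cpow_add _ _ ht0, Complex.cpow_one]
      rw [this]
      simp only [hf]
      ring
    · rw [Set.indicator_of_notMem h]
      have : ∑ k ∈ Finset.Icc 1 ⌊t⌋₊, f k = 0 := by
        refine Finset.sum_eq_zero fun k hk => ?_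
        simp only [hf]
        rw [if_pos]
        have h1 := (Finset.mem_Icc.mp hk).2
        have h2 : ⌊t⌋₊ ≤ N := Nat.floor_le_of_le (by simpa using h)
        omega
      rw [this, zero_mul]
  have i1 : IntegrableOn (fun t : ℝ => RN (fun n => χ n) m N t * (t : ℂ) ^ (-(s + 1))) (Set.Ioi (N : ℝ)) := by
    refine Integrable.bdd_mul (c := B) ?_ (RN_meas _ _ _).aestronglyMeasurable
      (Eventually.of_forall fun t => hB N t)
    exact integrableOn_Ioi_cpow_of_lt (by simp; linarith) hN0
  have i2 : IntegrableOn (fun t : ℝ => m * (t : ℂ) ^ (-s)) (Set.Ioi (N : ℝ)) :=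
    (integrableOn_Ioi_cpow_of_lt (by simp; linarith) hN0).const_mul m
  have i3 : IntegrableOn (fun t : ℝ => m * N * (t : ℂ) ^ (-(s + 1))) (Set.Ioi (N : ℝ)) :=
    (integrableOn_Ioi_cpow_of_lt (by simp; linarith) hN0).const_mul (m * N)
  have i23 : IntegrableOn (fun t : ℝ => m * (t : ℂ) ^ (-s) - m * N * (t : ℂ) ^ (-(s + 1)))
      (Set.Ioi (N : ℝ)) := i2.sub i3
  have hsub : Set.Ioi (1 : ℝ) ∩ Set.Ioi (N : ℝ) = Set.Ioi (N : ℝ) :=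
    Set.inter_eq_self_of_subset_right (Set.Ioi_subset_Ioi (by exact_mod_cast hN))
  rw [e1, e2, e3, setIntegral_congr_fun measurableSet_Ioi e4, setIntegral_indicator measurableSet_Ioi,
    hsub, integral_add i1 i23, integral_sub i2 i3, integral_const_mul, integral_const_mul,
    integral_Ioi_cpow_of_lt (by simp; linarith) hN0, integral_Ioi_cpow_of_lt (by simp; linarith) hN0]
  unfold JN
  have hNc : (N : ℂ) ≠ 0 := by exact_mod_cast hN0.ne'
  have p1 : (N : ℂ) ^ (-s + 1) = (N : ℂ) ^ (1 - s) := by congr 1; ring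
  have p2 : (N : ℂ) * (N : ℂ) ^ (-(s + 1) + 1) = (N : ℂ) ^ (1 - s) := by
    rw [show (1 : ℂ) - s = 1 + (-(s + 1) + 1) by ring, Complex.cpow_add _ (-(s + 1) + 1) hNc, Complex.cpow_one]
  have q1 : -s + 1 ≠ 0 := by intro h; apply hs1; linear_combination -h
  have q2 : -(s + 1) + 1 ≠ 0 := by intro h; apply hs0; linear_combination -h
  push_cast
  rw [p1]
  have : m * N * (-(N : ℂ) ^ (-(s + 1) + 1) / (-(s + 1) + 1)) = m * ((N : ℂ) ^ (1 - s) / s) := by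
    rw [← p2, show -(s + 1) + 1 = -s by ring]; field_simp
  rw [this]
  have : m * (-(N : ℂ) ^ (1 - s) / (-s + 1)) = m * ((N : ℂ) ^ (1 - s) / (s - 1)) := by
    rw [show -s + 1 = -(s - 1) by ring, neg_div_neg_eq]
  rw [this]
  field_simp
  ring

lemma LFunction_trunc {q : ℕ} [NeZero q] (χ : DirichletCharacter ℂ q) {m : ℂ} {B : ℝ}
    (hB : ∀ N t, ‖RN (fun n => χ n) m N t‖ ≤ B) {N : ℕ} (hN : 1 ≤ N) {s : ℂ} (hs : 0 < s.re)
    (him : s.im ≠ 0) :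
    DirichletCharacter.LFunction χ s =
      ∑ n ∈ Finset.Icc 1 N, χ n * (n : ℂ) ^ (-s) + m * (N : ℂ) ^ (1 - s) / (s - 1)
        + s * JN (fun n => χ n) m N s := by
  set U : Set ℂ := {z | 0 < z.re ∧ 0 < z.im * s.im} with hU
  have hUo : IsOpen U := by
    refine IsOpen.inter (isOpen_lt continuous_const continuous_re)
      (isOpen_lt continuous_const (continuous_im.mul continuous_const))
  have hUc : Convex ℝ U := by
    intro x hx y hy a b ha hb hab
    simp only [hU, Set.mem_ofPred_eq] at *
    simp only [add_re, real_smul, mul_re, ofReal_re, ofReal_im, add_im, mul_im, zero_mul, sub_zero, add_zero]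
    rcases ha.eq_or_lt with rfl | ha
    · have : b = 1 := by linarith
      subst this; simpa using hy
    · constructor
      · nlinarith [mul_pos ha hx.1, mul_nonneg hb hy.1.le]
      · nlinarith [mul_pos ha hx.2, mul_nonneg hb hy.2.le]
  have hsU : s ∈ U := ⟨hs, mul_self_pos.mpr him⟩
  have hU1 : ∀ z ∈ U, z ≠ 1 := by
    rintro z ⟨_, h⟩ rfl
    simp at h
  have hNc : (N : ℂ) ≠ 0 := by exact_mod_cast (by omega : N ≠ 0)
  refine AnalyticOnNhd.eqOn_of_preconnected_of_eventuallyEq (𝕜 := ℂ) (U := U) (z₀ := s + 1)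
    (f := DirichletCharacter.LFunction χ)
    (g := fun s => ∑ n ∈ Finset.Icc 1 N, χ n * (n : ℂ) ^ (-s) + m * (N : ℂ) ^ (1 - s) / (s - 1)
        + s * JN (fun n => χ n) m N s) ?_ ?_ hUc.isPreconnected ?_ ?_ hsU
  · refine DifferentiableOn.analyticOnNhd (fun z hz => ?_) hUo
    exact (DirichletCharacter.differentiableAt_LFunction χ z (Or.inl (hU1 z hz))).differentiableWithinAt
  · refine DifferentiableOn.analyticOnNhd (fun z hz => ?_) hUo
    refine DifferentiableAt.differentiableWithinAt ?_
    refine ((DifferentiableAt.fun_sum fun n hn => ?_).add ?_).add ?_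
    · have : (n : ℂ) ≠ 0 := by
        have := (Finset.mem_Icc.mp hn).1
        exact_mod_cast (by omega : n ≠ 0)
      exact (differentiableAt_id.neg.const_cpow (Or.inl this)).const_mul _
    · refine DifferentiableAt.div ?_ (by fun_prop) (sub_ne_zero.mpr (hU1 z hz))
      refine DifferentiableAt.const_mul ?_ _
      exact ((differentiableAt_const _).sub differentiableAt_id).const_cpow (Or.inl hNc)
    · exact differentiableAt_id.mul (JN_diff hB hN hz.1)
  · refine ⟨?_, ?_⟩
    · simp; linarith
    · simpa using hsU.2
  · have : {z : ℂ | 1 < z.re} ∈ 𝓝 (s + 1) :=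
      (isOpen_lt continuous_const continuous_re).mem_nhds (by simpa using hs)
    filter_upwards [this] with z hz
    exact LFunction_trunc_right χ hB hN hz

end PSB

namespace PSB
open Complex Filter Topology MeasureTheory

lemma LFunction_growth {q : ℕ} [NeZero q] (χ : DirichletCharacter ℂ q) {η : ℝ} (h0 : 0 < η)
    (h1 : η ≤ 1 / 2) :
    ∃ C : ℝ, 0 < C ∧ ∀ s : ℂ, 1 - η ≤ s.re → s.re ≤ 3 → 1 ≤ |s.im| →
      ‖DirichletCharacter.LFunction χ s‖ ≤ C * |s.im| ^ (2 * η) := by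
  obtain ⟨m, B₀, hB₀, hS⟩ := partial_sum_bdd χ
  set B := 2 * B₀ + ‖m‖ with hBdef
  have hBnn : 0 ≤ B := by positivity
  have hB : ∀ N t, ‖RN (fun n => χ n) m N t‖ ≤ B := fun N t => RN_bdd hB₀ hS N t
  have hZ : Summable (fun n : ℕ => (n : ℝ) ^ (-(1 + η))) := by
    rw [Real.summable_nat_rpow]; linarith
  set Z := ∑' n : ℕ, (n : ℝ) ^ (-(1 + η)) with hZdef
  have hZ0 : 0 ≤ Z := tsum_nonneg fun n => by positivity
  refine ⟨(Z + ‖m‖ + 8 * B + 1) * 2 ^ (2 * η), by positivity, fun s hs1 hs3 him => ?_⟩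
  have him0 : s.im ≠ 0 := by intro h; rw [h] at him; simp at him; linarith
  have hσ : 0 < s.re := by linarith
  set N := ⌈|s.im|⌉₊ with hN
  have hNge : |s.im| ≤ N := Nat.le_ceil _
  have hN2 : (N : ℝ) ≤ 2 * |s.im| := by
    have := Nat.ceil_lt_add_one (abs_nonneg s.im)
    linarith
  have hN1' : (1 : ℝ) ≤ N := him.trans hNge
  have hN1 : 1 ≤ N := by exact_mod_cast hN1'
  have hN0 : (0 : ℝ) < N := by linarith
  rw [LFunction_trunc χ hB hN1 hσ him0]
  have t1 : ‖∑ n ∈ Finset.Icc 1 N, χ n * (n : ℂ) ^ (-s)‖ ≤ Z * (N : ℝ) ^ (2 * η) := by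
    refine (norm_sum_le _ _).trans ?_
    calc ∑ n ∈ Finset.Icc 1 N, ‖χ n * (n : ℂ) ^ (-s)‖
        ≤ ∑ n ∈ Finset.Icc 1 N, (n : ℝ) ^ (-(1 + η)) * (N : ℝ) ^ (2 * η) := by
          refine Finset.sum_le_sum fun n hn => ?_
          rw [Finset.mem_Icc] at hn
          have hn1 : (1 : ℝ) ≤ n := by exact_mod_cast hn.1
          have hn0 : (0 : ℝ) < n := by linarith
          rw [norm_mul]
          have : ‖(n : ℂ) ^ (-s)‖ = (n : ℝ) ^ (-s.re) := by
            have := Complex.norm_cpow_eq_rpow_re_of_pos hn0 (-s)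
            simpa using this
          rw [this]
          calc ‖χ n‖ * (n : ℝ) ^ (-s.re) ≤ 1 * (n : ℝ) ^ (-(1 + η) + 2 * η) := by
                gcongr
                · exact χ.norm_le_one _
                · linarith
            _ = (n : ℝ) ^ (-(1 + η)) * (n : ℝ) ^ (2 * η) := by rw [one_mul, Real.rpow_add hn0]
            _ ≤ _ := by
                gcongr
                exact hn.2
      _ = (∑ n ∈ Finset.Icc 1 N, (n : ℝ) ^ (-(1 + η))) * (N : ℝ) ^ (2 * η) := by
          rw [Finset.sum_mul]
      _ ≤ _ := by
          gcongr
          exact hZ.sum_le_tsum _ fun n _ => by positivity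
  have t2 : ‖m * (N : ℂ) ^ (1 - s) / (s - 1)‖ ≤ ‖m‖ * (N : ℝ) ^ (2 * η) := by
    have e : ‖(N : ℂ) ^ (1 - s)‖ = (N : ℝ) ^ (1 - s.re) := by
      have := Complex.norm_cpow_eq_rpow_re_of_pos hN0 (1 - s)
      simpa using this
    have hs1' : 1 ≤ ‖s - 1‖ := by
      refine him.trans ?_
      have := Complex.abs_im_le_norm (s - 1)
      simpa using this
    rw [norm_div, norm_mul, e]
    calc ‖m‖ * (N : ℝ) ^ (1 - s.re) / ‖s - 1‖ ≤ ‖m‖ * (N : ℝ) ^ (1 - s.re) :=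
          div_le_self (by positivity) hs1'
      _ ≤ _ := by
          gcongr
          linarith
  have t3 : ‖s * JN (fun n => χ n) m N s‖ ≤ 8 * B * (N : ℝ) ^ (2 * η) := by
    rw [norm_mul]
    have hn : ‖s‖ ≤ 4 * N := by
      have := Complex.norm_le_abs_re_add_abs_im s
      rw [abs_of_pos hσ] at this
      linarith
    have hj := JN_bdd hB hN1 hσ
    have h2 : (N : ℝ) ^ (-s.re) / s.re ≤ 2 * ((N : ℝ) ^ (2 * η) / N) := by
      have a1 : (N : ℝ) ^ (-s.re) ≤ (N : ℝ) ^ (2 * η) / N := by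
        rw [← Real.rpow_sub_one hN0.ne']
        exact Real.rpow_le_rpow_of_exponent_le hN1' (by linarith)
      rw [div_le_iff₀ hσ]
      have : 0 ≤ (N : ℝ) ^ (2 * η) / N := by positivity
      nlinarith
    calc ‖s‖ * ‖JN (fun n => χ n) m N s‖ ≤ (4 * N) * (B * (2 * ((N : ℝ) ^ (2 * η) / N))) := by
          gcongr
          exact hj.trans (by gcongr)
      _ = _ := by field_simp; ring
  calc _ ≤ ‖∑ n ∈ Finset.Icc 1 N, χ n * (n : ℂ) ^ (-s)‖ + ‖m * (N : ℂ) ^ (1 - s) / (s - 1)‖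
        + ‖s * JN (fun n => χ n) m N s‖ := norm_add₃_le
    _ ≤ (Z + ‖m‖ + 8 * B + 1) * (N : ℝ) ^ (2 * η) := by
        have : 0 ≤ (N : ℝ) ^ (2 * η) := by positivity
        nlinarith
    _ ≤ (Z + ‖m‖ + 8 * B + 1) * (2 * |s.im|) ^ (2 * η) := by gcongr
    _ = _ := by rw [Real.mul_rpow (by norm_num) (abs_nonneg _)]; ring

end PSB

namespace PSB
open Complex Filter Topology MeasureTheory DirichletCharacter

lemma trivChar_bound (q : ℕ) [NeZero q] :
    ∃ K : ℝ, 0 < K ∧ ∀ x : ℝ, 0 < x → x ≤ 1 → ‖LFunctionTrivChar q (1 + x)‖ ≤ K / x := by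
  have hc : ContinuousOn (fun x : ℝ => LFunctionTrivChar₁ q (1 + x)) (Set.Icc 0 1) :=
    ((differentiable_LFunctionTrivChar₁ q).continuous.comp (by fun_prop)).continuousOn
  obtain ⟨K, hK⟩ := isCompact_Icc.exists_bound_of_continuousOn hc
  refine ⟨|K| + 1, by positivity, fun x hx0 hx1 => ?_⟩
  have h := hK x ⟨hx0.le, hx1⟩
  have hx : (1 + x : ℂ) ≠ 1 := by
    intro h
    have : (x : ℂ) = 0 := by linear_combination h
    exact hx0.ne' (by exact_mod_cast this)
  simp only [LFunctionTrivChar₁] at h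
  rw [Function.update_of_ne hx, norm_mul, add_sub_cancel_left, Complex.norm_real, Real.norm_eq_abs,
    abs_of_pos hx0] at h
  rw [le_div_iff₀ hx0]
  linarith [le_abs_self K]

lemma deriv_growth {q : ℕ} [NeZero q] (χ : DirichletCharacter ℂ q) {η : ℝ} (h0 : 0 < η)
    (h1 : η ≤ 1 / 2) :
    ∃ C : ℝ, 0 < C ∧ ∀ s : ℂ, 1 - η / 2 ≤ s.re → s.re ≤ 5 / 2 → 2 ≤ |s.im| →
      ‖deriv (LFunction χ) s‖ ≤ C * |s.im| ^ (2 * η) := by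
  obtain ⟨C, hC0, hC⟩ := LFunction_growth χ h0 h1
  refine ⟨C * 2 ^ (2 * η) / (η / 2), by positivity, fun s hs1 hs2 him => ?_⟩
  have key : ∀ z ∈ Metric.closedBall s (η / 2), 1 - η ≤ z.re ∧ z.re ≤ 3 ∧ 1 ≤ |z.im| ∧
      |z.im| ≤ 2 * |s.im| := by
    intro z hz
    rw [Metric.mem_closedBall, dist_eq] at hz
    have a1 := (abs_re_le_norm (z - s)).trans hz
    have a2 := (abs_im_le_norm (z - s)).trans hz
    rw [sub_re, abs_le] at a1
    rw [sub_im] at a2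
    have a3 := abs_sub_abs_le_abs_sub z.im s.im
    have a4 := abs_sub_abs_le_abs_sub s.im z.im
    rw [abs_sub_comm] at a4
    refine ⟨by linarith, by linarith, by linarith, by linarith⟩
  have hd : DiffContOnCl ℂ (LFunction χ) (Metric.ball s (η / 2)) := by
    refine DifferentiableOn.diffContOnCl_ball (U := Metric.closedBall s (η / 2)) ?_ subset_rfl
    intro z hz
    refine (differentiableAt_LFunction χ z (Or.inl ?_)).differentiableWithinAt
    rintro rfl
    have := (key 1 hz).2.2.1
    simp at this
    linarith
  have := Complex.norm_deriv_le_of_forall_mem_sphere_norm_le (c := s) (R := η / 2)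
    (C := C * 2 ^ (2 * η) * |s.im| ^ (2 * η)) (by positivity) hd ?_
  · refine this.trans (le_of_eq ?_)
    ring
  · intro z hz
    obtain ⟨b1, b2, b3, b4⟩ := key z (Metric.sphere_subset_closedBall hz)
    refine (hC z b1 b2 b3).trans ?_
    rw [mul_assoc, ← Real.mul_rpow (by norm_num) (abs_nonneg _)]
    gcongr

lemma LFunction_lower {q : ℕ} [NeZero q] (χ : DirichletCharacter ℂ q) {η : ℝ} (h0 : 0 < η)
    (h1 : η ≤ 1 / 2) :
    ∃ c : ℝ, 0 < c ∧ ∀ s : ℂ, 1 < s.re → s.re ≤ 2 → 2 ≤ |s.im| →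
      c / (|s.im| ^ (2 * η)) ^ 4 ≤ ‖LFunction χ s‖ := by
  obtain ⟨K, hK0, hK⟩ := trivChar_bound q
  obtain ⟨C', hC'0, hC'⟩ := deriv_growth χ h0 h1
  obtain ⟨C₂, hC₂0, hC₂⟩ := LFunction_growth (χ ^ 2) h0 h1
  set A := K ^ 3 * (C₂ * 2 ^ (2 * η)) with hA
  have hA0 : 0 < A := by positivity
  set κ := min 1 (1 / (16 * C' ^ 4 * A)) with hκ
  have hκ0 : 0 < κ := by positivity
  have hκ1 : κ ≤ 1 := min_le_left _ _
  have hκ2 : κ * (16 * C' ^ 4 * A) ≤ 1 := by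
    have : κ ≤ 1 / (16 * C' ^ 4 * A) := min_le_right _ _
    rwa [le_div_iff₀ (by positivity)] at this
  refine ⟨C' * κ, by positivity, fun s hs1 hs2 him => ?_⟩
  set X := |s.im| ^ (2 * η) with hX
  have hX1 : 1 ≤ X := Real.one_le_rpow (by linarith) (by linarith)
  have hX0 : 0 < X := by linarith
  -- 3-4-1
  have h341 : ∀ x : ℝ, 0 < x → x ≤ 1 →
      x ^ 3 ≤ A * X * ‖LFunction χ (1 + x + I * s.im)‖ ^ 4 := by
    intro x hx0 hx1
    have h := norm_LFunction_product_ge_one χ hx0 s.im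
    rw [norm_mul, norm_mul, norm_pow, norm_pow] at h
    have b1 := hK x hx0 hx1
    have b2 : ‖LFunction (χ ^ 2) (1 + x + 2 * I * s.im)‖ ≤ C₂ * 2 ^ (2 * η) * X := by
      have e1 : (1 + x + 2 * I * s.im : ℂ).re = 1 + x := by simp
      have e2 : (1 + x + 2 * I * s.im : ℂ).im = 2 * s.im := by simp
      have e3 : |2 * s.im| = 2 * |s.im| := by rw [abs_mul, abs_two]
      have := hC₂ (1 + x + 2 * I * s.im) (by rw [e1]; linarith) (by rw [e1]; linarith)
        (by rw [e2, e3]; linarith)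
      rw [e2, e3, Real.mul_rpow (by norm_num) (abs_nonneg _)] at this
      linarith
    have : 1 ≤ (K / x) ^ 3 * ‖LFunction χ (1 + x + I * s.im)‖ ^ 4 * (C₂ * 2 ^ (2 * η) * X) := by
      refine le_trans h ?_
      gcongr
    have hx3 : 0 < x ^ 3 := by positivity
    calc x ^ 3 = x ^ 3 * 1 := by ring
      _ ≤ x ^ 3 * ((K / x) ^ 3 * ‖LFunction χ (1 + x + I * s.im)‖ ^ 4 * (C₂ * 2 ^ (2 * η) * X)) := by
        gcongr
      _ = _ := by rw [hA]; field_simp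
  set x₀ := κ / X ^ 5 with hx₀
  have hx₀0 : 0 < x₀ := by positivity
  have hx₀1 : x₀ ≤ 1 := by
    rw [hx₀, div_le_one (by positivity)]
    exact hκ1.trans (one_le_pow₀ hX1)
  have hbig : ∀ x : ℝ, x₀ ≤ x → x ≤ 1 → 2 * (C' * κ / X ^ 4) ≤ ‖LFunction χ (1 + x + I * s.im)‖ := by
    intro x hx hx1
    have h := h341 x (hx₀0.trans_le hx) hx1
    refine le_of_pow_le_pow_left₀ (n := 4) (by norm_num) (norm_nonneg _) ?_
    have h3 : x₀ ^ 3 ≤ x ^ 3 := by gcongr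
    have h4 : x₀ ^ 3 / (A * X) ≤ ‖LFunction χ (1 + x + I * s.im)‖ ^ 4 := by
      rw [div_le_iff₀ (by positivity)]; linarith
    refine le_trans ?_ h4
    rw [le_div_iff₀ (by positivity), hx₀]
    have : (2 * (C' * κ / X ^ 4)) ^ 4 * (A * X) = (κ * (16 * C' ^ 4 * A)) * (κ ^ 3 / X ^ 15) := by
      field_simp; ring
    rw [this]
    have e : (κ / X ^ 5) ^ 3 = 1 * (κ ^ 3 / X ^ 15) := by field_simp
    rw [e]
    gcongr
  have es : s = 1 + ((s.re - 1 : ℝ) : ℂ) + I * s.im := by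
    apply Complex.ext <;> simp
  rcases le_total x₀ (s.re - 1) with hx | hx
  · have h := hbig _ hx (by linarith)
    rw [← es] at h
    have : 0 < C' * κ / X ^ 4 := by positivity
    linarith
  · have h := hbig x₀ le_rfl hx₀1
    set w : ℂ := 1 + (x₀ : ℂ) + I * s.im with hw
    have hwre : w.re = 1 + x₀ := by simp [hw]
    have hwim : w.im = s.im := by simp [hw]
    set V : Set ℂ := {z | 1 ≤ z.re ∧ z.re ≤ 2 ∧ z.im = s.im} with hV
    have hVc : Convex ℝ V := by
      intro x hx y hy a b ha hb hab
      simp only [hV, Set.mem_ofPred_eq] at *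
      simp only [add_re, real_smul, mul_re, ofReal_re, ofReal_im, add_im, mul_im, zero_mul, sub_zero,
        add_zero]
      obtain ⟨x1, x2, x3⟩ := hx
      obtain ⟨y1, y2, y3⟩ := hy
      refine ⟨?_, ?_, ?_⟩
      · nlinarith
      · nlinarith
      · rw [x3, y3, ← add_mul, hab, one_mul]
    have hdist := Convex.norm_image_sub_le_of_norm_deriv_le (f := LFunction χ) (s := V) (x := s) (y := w)
      (C := C' * X) ?_ ?_ hVc ⟨hs1.le, hs2, rfl⟩ ⟨by linarith, by linarith, hwim⟩
    · have hws : ‖w - s‖ ≤ x₀ := by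
        have : w - s = ((x₀ - (s.re - 1) : ℝ) : ℂ) := by
          apply Complex.ext <;> simp [hw]
          ring
        rw [this, Complex.norm_real, Real.norm_eq_abs, abs_of_nonneg (by linarith)]
        linarith
      have h5 : ‖LFunction χ w‖ - ‖LFunction χ s‖ ≤ C' * X * x₀ :=
        (norm_sub_norm_le _ _).trans (hdist.trans (by gcongr))
      have h6 : C' * X * x₀ = C' * κ / X ^ 4 := by rw [hx₀]; field_simp
      linarith
    · rintro z ⟨z1, z2, z3⟩
      refine differentiableAt_LFunction χ z (Or.inl ?_)
      rintro rfl
      rw [← z3] at him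
      simp at him
      linarith
    · rintro z ⟨z1, z2, z3⟩
      have := hC' z (by linarith) (by linarith) (by rw [z3]; exact him)
      rwa [z3] at this

lemma logDeriv_ball {q : ℕ} [NeZero q] (χ : DirichletCharacter ℂ q) {η : ℝ} (h0 : 0 < η)
    (h1 : η ≤ 1 / 2) :
    ∃ κ M : ℝ, 0 < κ ∧ 0 < M ∧ κ ≤ 1 / 4 ∧ ∀ s : ℂ, 1 < s.re → s.re ≤ 2 → 3 ≤ |s.im| →
      ∀ z ∈ Metric.closedBall s (κ / (|s.im| ^ (2 * η)) ^ 5), 2 ≤ |z.im| ∧ LFunction χ z ≠ 0 ∧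
        ‖deriv (LFunction χ) z / LFunction χ z‖ ≤ M * (|s.im| ^ (2 * η)) ^ 5 := by
  obtain ⟨C', hC'0, hC'⟩ := deriv_growth χ h0 h1
  obtain ⟨c, hc0, hc⟩ := LFunction_lower χ h0 h1
  set C'' := C' * 2 ^ (2 * η) with hC''
  have hC''0 : 0 < C'' := by positivity
  set κ := min (η / 2) (c / (2 * C'')) with hκ
  have hκ0 : 0 < κ := by positivity
  have hκ1 : κ ≤ η / 2 := min_le_left _ _
  have hκ2 : C'' * κ ≤ c / 2 := by
    have : κ ≤ c / (2 * C'') := min_le_right _ _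
    rw [le_div_iff₀ (by positivity)] at this
    linarith
  refine ⟨κ, 2 * C'' / c, hκ0, by positivity, by linarith, fun s hs1 hs2 him => ?_⟩
  set X := |s.im| ^ (2 * η) with hX
  have hX1 : 1 ≤ X := Real.one_le_rpow (by linarith) (by linarith)
  have hX0 : 0 < X := by linarith
  have hr : κ / X ^ 5 ≤ κ := div_le_self hκ0.le (one_le_pow₀ hX1)
  have hr0 : 0 < κ / X ^ 5 := by positivity
  have key : ∀ z ∈ Metric.closedBall s (κ / X ^ 5), 1 - η / 2 ≤ z.re ∧ z.re ≤ 5 / 2 ∧ 2 ≤ |z.im| ∧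
      |z.im| ≤ 2 * |s.im| := by
    intro z hz
    rw [Metric.mem_closedBall, dist_eq] at hz
    have a1 := (abs_re_le_norm (z - s)).trans hz
    have a2 := (abs_im_le_norm (z - s)).trans hz
    rw [sub_re, abs_le] at a1
    rw [sub_im] at a2
    have a3 := abs_sub_abs_le_abs_sub z.im s.im
    have a4 := abs_sub_abs_le_abs_sub s.im z.im
    rw [abs_sub_comm] at a4
    refine ⟨by linarith, by linarith, by linarith, by linarith⟩
  have hder : ∀ z ∈ Metric.closedBall s (κ / X ^ 5), ‖deriv (LFunction χ) z‖ ≤ C'' * X := by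
    intro z hz
    obtain ⟨b1, b2, b3, b4⟩ := key z hz
    refine (hC' z b1 b2 b3).trans ?_
    rw [hC'', hX, mul_assoc, ← Real.mul_rpow (by norm_num) (abs_nonneg _)]
    gcongr
  intro z hz
  have hdist := Convex.norm_image_sub_le_of_norm_deriv_le (f := LFunction χ)
      (s := Metric.closedBall s (κ / X ^ 5)) (x := z) (y := s)
      (C := C'' * X) ?_ hder (convex_closedBall _ _) hz (Metric.mem_closedBall_self hr0.le)
  · have h2 : ‖s - z‖ ≤ κ / X ^ 5 := by
      rw [Metric.mem_closedBall, dist_comm, dist_eq] at hz; exact hz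
    have h5 : ‖LFunction χ s‖ - ‖LFunction χ z‖ ≤ C'' * X * (κ / X ^ 5) :=
        (norm_sub_norm_le _ _).trans (hdist.trans (by gcongr))
    have h6 : C'' * X * (κ / X ^ 5) = C'' * κ / X ^ 4 := by field_simp
    have h7 : C'' * κ / X ^ 4 ≤ c / 2 / X ^ 4 := by gcongr
    have h8 := hc s hs1 hs2 (by linarith)
    have h9 : c / X ^ 4 = 2 * (c / 2 / X ^ 4) := by ring
    have h10 : c / 2 / X ^ 4 ≤ ‖LFunction χ z‖ := by
      rw [← hX] at h8
      linarith
    have h11 : 0 < c / 2 / X ^ 4 := by positivity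
    refine ⟨(key z hz).2.2.1, norm_pos_iff.mp (h11.trans_le h10), ?_⟩
    rw [norm_div]
    calc ‖deriv (LFunction χ) z‖ / ‖LFunction χ z‖ ≤ C'' * X / (c / 2 / X ^ 4) := by
          gcongr
          exact hder z hz
      _ = _ := by field_simp
  · intro z hz
    refine differentiableAt_LFunction χ z (Or.inl ?_)
    rintro rfl
    have := (key 1 hz).2.2.1
    simp at this
    linarith

end PSB

namespace PSB
open Complex Filter Topology MeasureTheory DirichletCharacter

def Good (k : ℕ) (G : ℂ → ℂ) : Prop :=
  (∀ z : ℂ, 1 ≤ z.re → AnalyticAt ℂ G z) ∧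
    ∃ C : ℝ, 0 < C ∧ ∀ s : ℂ, 1 < s.re → s.re ≤ 2 → ‖iteratedDeriv k G s‖ ≤ C * (1 + |s.im|)

lemma Good.add {k : ℕ} {G H : ℂ → ℂ} (hG : Good k G) (hH : Good k H) :
    Good k (fun z => G z + H z) := by
  obtain ⟨hG1, C, hC, hG2⟩ := hG
  obtain ⟨hH1, D, hD, hH2⟩ := hH
  refine ⟨fun z hz => (hG1 z hz).fun_add (hH1 z hz), C + D, by positivity, fun s h1 h2 => ?_⟩
  rw [iteratedDeriv_fun_add (hG1 s h1.le).contDiffAt (hH1 s h1.le).contDiffAt]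
  refine (norm_add_le _ _).trans ?_
  have := hG2 s h1 h2
  have := hH2 s h1 h2
  linarith

lemma Good.const_mul {k : ℕ} {G : ℂ → ℂ} (hG : Good k G) (c : ℂ) :
    Good k (fun z => c * G z) := by
  obtain ⟨hG1, C, hC, hG2⟩ := hG
  refine ⟨fun z hz => analyticAt_const.fun_mul (hG1 z hz), (‖c‖ + 1) * C, by positivity,
    fun s h1 h2 => ?_⟩
  rw [iteratedDeriv_const_mul_field, norm_mul]
  have := hG2 s h1 h2
  have h3 := norm_nonneg c
  have h4 := norm_nonneg (iteratedDeriv k G s)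
  nlinarith

lemma Good.zero (k : ℕ) : Good k (fun _ => 0) := by
  refine ⟨fun z hz => analyticAt_const, 1, one_pos, fun s _ _ => ?_⟩
  have : ‖iteratedDeriv k (fun _ : ℂ => (0:ℂ)) s‖ = 0 := by
    simp
  rw [this]; positivity

lemma Good.sum {k : ℕ} {ι : Type*} (S : Finset ι) (G : ι → ℂ → ℂ) (hG : ∀ i ∈ S, Good k (G i)) :
    Good k (fun z => ∑ i ∈ S, G i z) := by
  classical
  induction S using Finset.induction_on with
  | empty => simpa using Good.zero k
  | insert i S hi ih =>
    have h1 := hG i (Finset.mem_insert_self _ _)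
    have h2 := ih fun j hj => hG j (Finset.mem_insert_of_mem hj)
    simpa only [Finset.sum_insert hi] using h1.add h2

lemma good_of_ball (k : ℕ) (G : ℂ → ℂ) (hG : ∀ z : ℂ, 1 ≤ z.re → AnalyticAt ℂ G z)
    (κ M : ℝ) (hκ : 0 < κ) (hM : 0 < M)
    (hb : ∀ s : ℂ, 1 < s.re → s.re ≤ 2 → 3 ≤ |s.im| →
      ∀ z ∈ Metric.closedBall s (κ / (|s.im| ^ (2 * (1 / (10 * ((k:ℝ) + 1))))) ^ 5),
        DifferentiableAt ℂ G z ∧ ‖G z‖ ≤ M * (|s.im| ^ (2 * (1 / (10 * ((k:ℝ) + 1))))) ^ 5) :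
    Good k G := by
  refine ⟨hG, ?_⟩
  have hcont : ContinuousOn (iteratedDeriv k G) (Set.Icc 1 2 ×ℂ Set.Icc (-3) 3) := by
    intro z hz
    rw [iteratedDeriv_eq_iterate]
    exact ((hG z hz.1.1).iterated_deriv k).continuousAt.continuousWithinAt
  obtain ⟨C, hC⟩ := (isCompact_Icc.reProdIm isCompact_Icc).exists_bound_of_continuousOn hcont
  refine ⟨|C| + k.factorial * M / κ ^ k, by positivity, fun s h1 h2 => ?_⟩
  rcases le_total |s.im| 3 with h3 | h3
  · have := hC s ⟨⟨h1.le, h2⟩, abs_le.1 h3⟩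
    have h5 : 0 ≤ k.factorial * M / κ ^ k := by positivity
    have h6 := le_abs_self C
    have h7 := abs_nonneg C
    have h8 := abs_nonneg s.im
    nlinarith
  · set X := |s.im| ^ (2 * (1 / (10 * ((k:ℝ) + 1)))) with hX
    have ht : 0 < |s.im| := by linarith
    have hX0 : 0 < X := Real.rpow_pos_of_pos ht _
    have hR : 0 < κ / X ^ 5 := by positivity
    have key := Complex.norm_iteratedDeriv_le_of_forall_mem_sphere_norm_le (f := G) (c := s)
      (C := M * X ^ 5) k hR
      (DifferentiableOn.diffContOnCl_ball (U := Metric.closedBall s (κ / X ^ 5))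
        (fun z hz => (hb s h1 h2 h3 z hz).1.differentiableWithinAt) subset_rfl)
      (fun z hz => (hb s h1 h2 h3 z (Metric.sphere_subset_closedBall hz)).2)
    refine key.trans ?_
    have e1 : X ^ (5 * (k + 1)) = |s.im| := by
      rw [hX, ← Real.rpow_natCast, ← Real.rpow_mul ht.le]
      have : (2 * (1 / (10 * ((k:ℝ) + 1)))) * ((5 * (k + 1) : ℕ) : ℝ) = 1 := by
        push_cast; field_simp; norm_num
      rw [this, Real.rpow_one]
    have e2 : k.factorial * (M * X ^ 5) / (κ / X ^ 5) ^ k = k.factorial * M / κ ^ k * |s.im| := by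
      rw [← e1, div_pow]
      field_simp
      ring
    rw [e2]
    have h5 : 0 ≤ k.factorial * M / κ ^ k := by positivity
    have h7 := abs_nonneg C
    nlinarith

lemma good_nontriv {q : ℕ} [NeZero q] (χ : DirichletCharacter ℂ q) (hχ : χ ≠ 1) (k : ℕ) :
    Good k (fun s => deriv (LFunction χ) s / LFunction χ s) := by
  have hη0 : 0 < 1 / (10 * ((k:ℝ) + 1)) := by positivity
  have hη1 : 1 / (10 * ((k:ℝ) + 1)) ≤ 1 / 2 := by
    have hk : (0:ℝ) ≤ k := by positivity
    exact one_div_le_one_div_of_le (by norm_num) (by linarith)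
  obtain ⟨κ, M, hκ, hM, -, h⟩ := logDeriv_ball χ hη0 hη1
  have hA : ∀ z, AnalyticAt ℂ (LFunction χ) z := fun z =>
    (differentiable_LFunction hχ).analyticAt z
  refine good_of_ball k _ (fun z hz => (hA z).deriv.fun_div (hA z)
    (LFunction_ne_zero_of_one_le_re χ (.inl hχ) hz)) κ M hκ hM fun s h1 h2 h3 z hz => ?_
  obtain ⟨-, h4, h5⟩ := h s h1 h2 h3 z hz
  exact ⟨((hA z).deriv.fun_div (hA z) h4).differentiableAt, h5⟩

lemma good_triv (q : ℕ) [NeZero q] (k : ℕ) :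
    Good k (fun s => deriv (LFunctionTrivChar₁ q) s / LFunctionTrivChar₁ q s) := by
  have hη0 : 0 < 1 / (10 * ((k:ℝ) + 1)) := by positivity
  have hη1 : 1 / (10 * ((k:ℝ) + 1)) ≤ 1 / 2 := by
    have hk : (0:ℝ) ≤ k := by positivity
    exact one_div_le_one_div_of_le (by norm_num) (by linarith)
  obtain ⟨κ, M, hκ, hM, -, h⟩ := logDeriv_ball (1 : DirichletCharacter ℂ q) hη0 hη1
  have hA : ∀ z, AnalyticAt ℂ (LFunctionTrivChar₁ q) z := fun z =>
    (differentiable_LFunctionTrivChar₁ q).analyticAt z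
  have hv : ∀ z, z ≠ 1 → LFunctionTrivChar₁ q z = (z - 1) * LFunction (1 : DirichletCharacter ℂ q) z := by
    intro z hz
    rw [LFunctionTrivChar₁, Function.update_of_ne hz, LFunctionTrivChar]
  refine good_of_ball k _ (fun z hz => (hA z).deriv.fun_div (hA z) ?_) κ (M + 1) hκ (by linarith)
    fun s h1 h2 h3 z hz => ?_
  · rcases eq_or_ne z 1 with rfl | hz1
    · exact LFunctionTrivChar₁_apply_one_ne_zero q
    · rw [hv z hz1]
      exact mul_ne_zero (sub_ne_zero.2 hz1) (LFunction_ne_zero_of_one_le_re _ (.inr hz1) hz)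
  · obtain ⟨h6, h4, h5⟩ := h s h1 h2 h3 z hz
    have hz1 : z ≠ 1 := by
      rintro rfl
      norm_num at h6
    have hz2 := sub_ne_zero.2 hz1
    refine ⟨((hA z).deriv.fun_div (hA z) ?_).differentiableAt, ?_⟩
    · rw [hv z hz1]; exact mul_ne_zero hz2 h4
    have e : deriv (LFunctionTrivChar₁ q) z / LFunctionTrivChar₁ q z
        = 1 / (z - 1) + deriv (LFunction (1 : DirichletCharacter ℂ q)) z / LFunction (1 : DirichletCharacter ℂ q) z := by
      rw [hv z hz1, deriv_LFunctionTrivChar₁_apply_of_ne_one _ hz1, LFunctionTrivChar]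
      field_simp
      try ring
    rw [e]
    have h7 : ‖1 / (z - 1)‖ ≤ 1 := by
      rw [norm_div, norm_one]
      have h8 : 1 ≤ ‖z - 1‖ := by
        have := Complex.abs_im_le_norm (z - 1)
        simp at this
        linarith
      exact (div_le_one (by linarith)).2 h8
    set X := |s.im| ^ (2 * (1 / (10 * ((k:ℝ) + 1)))) with hX
    have hX1 : 1 ≤ X := Real.one_le_rpow (by linarith) (by positivity)
    have : 1 ≤ X ^ 5 := one_le_pow₀ hX1
    refine (norm_add_le _ _).trans ?_
    linarith

open ArithmeticFunction.vonMangoldt in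
theorem good_aux {q : ℕ} [NeZero q] (a : ZMod q) (k : ℕ) :
    Good k (LFunctionResidueClassAux a) := by
  classical
  have h1 := (good_triv q k).const_mul (-1)
  have h2 := Good.sum (k := k) ({1}ᶜ : Finset (DirichletCharacter ℂ q))
    (fun χ s => (- χ a⁻¹) * (deriv (LFunction χ) s / LFunction χ s))
    (fun χ hχ => (good_nontriv χ (by simpa using hχ) k).const_mul _)
  have h3 := (h1.add h2).const_mul ((q.totient : ℂ)⁻¹)
  convert h3 using 2 with s
  simp only [LFunctionResidueClassAux]
  rw [sub_eq_add_neg, ← Finset.sum_neg_distrib]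
  congr 2
  · ring
  · refine Finset.sum_congr (by congr!) fun χ _ => ?_
    ring

end PSB

namespace PSB
open Complex Filter Topology MeasureTheory DirichletCharacter

lemma integrable_pow_exp (k : ℕ) {c : ℝ} (hc : 0 < c) :
    IntegrableOn (fun v : ℝ => v ^ k * Real.exp (-c * v)) (Set.Ioi 0) := by
  have := integrableOn_rpow_mul_exp_neg_mul_rpow (s := (k:ℝ)) (p := 1) (b := c)
    (by have : (0:ℝ) ≤ k := by positivity
        linarith) one_pos hc
  simpa using this

lemma norm_pow_cexp (k : ℕ) (r : ℂ) {v : ℝ} (hv : 0 < v) :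
    ‖(v : ℂ) ^ k * cexp (-r * v)‖ = v ^ k * Real.exp (-r.re * v) := by
  rw [norm_mul, norm_pow, Complex.norm_real, Real.norm_eq_abs, abs_of_pos hv, Complex.norm_exp]
  simp

lemma integrable_pow_cexp (k : ℕ) {r : ℂ} (hr : 0 < r.re) :
    IntegrableOn (fun v : ℝ => (v : ℂ) ^ k * cexp (-r * v)) (Set.Ioi 0) := by
  refine (integrable_pow_exp k hr).mono' (by fun_prop) ?_
  filter_upwards [ae_restrict_mem measurableSet_Ioi] with v hv
  rw [norm_pow_cexp k r hv]

lemma laplace_pow (k : ℕ) {r : ℂ} (hr : 0 < r.re) :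
    ∫ v in Set.Ioi (0:ℝ), (v : ℂ) ^ k * cexp (-r * v) = k.factorial / r ^ (k + 1) := by
  have hr0 : r ≠ 0 := by rintro rfl; simp at hr
  induction k with
  | zero =>
    have := integral_exp_mul_complex_Ioi (a := -r) (by simpa using hr) 0
    simp only [pow_zero, one_mul, this]
    simp
  | succ k ih =>
    have h1 : ∀ v ∈ Set.Ioi (0:ℝ), HasDerivAt (fun v : ℝ => (v : ℂ) ^ (k + 1) * cexp (-r * v))
        ((k + 1) * ((v : ℂ) ^ k * cexp (-r * v)) - r * ((v : ℂ) ^ (k + 1) * cexp (-r * v))) v := by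
      intro v _
      have hv : HasDerivAt (fun v : ℝ => (v : ℂ)) 1 v := Complex.ofRealCLM.hasDerivAt
      have := (hv.fun_pow (k + 1)).fun_mul ((hv.const_mul (-r)).cexp)
      refine this.congr_deriv ?_
      push_cast [Nat.add_sub_cancel]
      ring
    have h2 : Tendsto (fun v : ℝ => (v : ℂ) ^ (k + 1) * cexp (-r * v)) atTop (𝓝 0) := by
      rw [tendsto_zero_iff_norm_tendsto_zero]
      have := tendsto_rpow_mul_exp_neg_mul_atTop_nhds_zero ((k + 1 : ℕ) : ℝ) r.re hr
      refine this.congr' ?_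
      filter_upwards [eventually_gt_atTop 0] with v hv
      rw [norm_pow_cexp _ r hv, Real.rpow_natCast]
    have i1 := (integrable_pow_cexp k hr).const_mul ((k : ℂ) + 1)
    have i2 := (integrable_pow_cexp (k + 1) hr).const_mul r
    have h3 := integral_Ioi_of_hasDerivAt_of_tendsto
      (f := fun v : ℝ => (v : ℂ) ^ (k + 1) * cexp (-r * v)) (a := 0)
      (by fun_prop) h1 (i1.sub i2) h2
    rw [integral_sub i1 i2, integral_const_mul, integral_const_mul, ih] at h3
    simp only [ofReal_zero, zero_pow (Nat.succ_ne_zero k), zero_mul, sub_zero] at h3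
    have h4 : r * ∫ v in Set.Ioi (0:ℝ), (v : ℂ) ^ (k + 1) * cexp (-r * v)
      = (k + 1) * (k.factorial / r ^ (k + 1)) := by linear_combination -h3
    rw [Nat.factorial_succ]
    push_cast
    rw [eq_div_iff (pow_ne_zero _ hr0), pow_succ r (k + 1), mul_comm (r ^ (k+1)), ← mul_assoc,
      mul_comm _ r, h4]
    field_simp

open ArithmeticFunction.vonMangoldt

/-- coefficients `(log n)^k Λ_a(n)` -/
noncomputable def bc {q : ℕ} (a : ZMod q) (k : ℕ) : ℕ → ℂ :=
  LSeries.logMul^[k] (fun n => (residueClass a n : ℂ))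

lemma bc_apply {q : ℕ} (a : ZMod q) (k n : ℕ) :
    bc a k n = ((Real.log n ^ k * residueClass a n : ℝ) : ℂ) := by
  unfold bc
  induction k with
  | zero => simp
  | succ k ih =>
    rw [Function.iterate_succ_apply', LSeries.logMul, ih]
    push_cast
    ring

lemma D_bound {q : ℕ} [NeZero q] {a : ZMod q} (ha : IsUnit a) (k : ℕ) :
    ∃ C : ℝ, 0 < C ∧ ∀ s : ℂ, 1 < s.re → s.re ≤ 2 →
      ‖LSeries (bc a k) s - (q.totient : ℂ)⁻¹ * (k.factorial / (s - 1) ^ (k + 1))‖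
        ≤ C * (1 + |s.im|) := by
  obtain ⟨-, C, hC, h⟩ := good_aux a k
  refine ⟨C, hC, fun s h1 h2 => ?_⟩
  have hs : (s - 1) ≠ 0 := by
    intro h0
    have : s = 1 := sub_eq_zero.1 h0
    rw [this] at h1; simp at h1
  have hop : {s : ℂ | 1 < s.re} ∈ 𝓝 s := (isOpen_lt continuous_const continuous_re).mem_nhds h1
  have e1 : LFunctionResidueClassAux a =ᶠ[𝓝 s]
      (fun s ↦ LSeries (fun n => (residueClass a n : ℂ)) s - (q.totient : ℂ)⁻¹ * (s - 1)⁻¹) := by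
    filter_upwards [hop] with z hz
    simp only [eqOn_LFunctionResidueClassAux ha hz, div_eq_mul_inv]
  have habs : LSeries.abscissaOfAbsConv (fun n => (residueClass a n : ℂ)) < s.re :=
    (abscissaOfAbsConv_residueClass_le_one a).trans_lt (by exact_mod_cast h1)
  have e2 := e1.iteratedDeriv_eq k
  have c1 : ContDiffAt ℂ k (LSeries (fun n => (residueClass a n : ℂ))) s :=
    ((LSeries_analyticOnNhd _) s habs).contDiffAt
  have c3 : ContDiffAt ℂ k (fun s : ℂ => (s - 1)⁻¹) s := by
    exact ContDiffAt.fun_inv (f := fun z : ℂ => z - 1) (by fun_prop) hs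
  have c2 : ContDiffAt ℂ k (fun s : ℂ => (q.totient : ℂ)⁻¹ * (s - 1)⁻¹) s :=
    contDiffAt_const.mul c3
  rw [iteratedDeriv_fun_sub c1 c2, LSeries_iteratedDeriv k habs,
    iteratedDeriv_const_mul_field _ (fun s : ℂ => (s - 1)⁻¹),
    iteratedDeriv_comp_sub_const k (fun z : ℂ => z⁻¹) 1] at e2
  have e3 : iteratedDeriv k (fun z : ℂ => z⁻¹) (s - 1)
      = (-1) ^ k * (k.factorial / (s - 1) ^ (k + 1)) := by
    rw [iteratedDeriv_eq_iterate]
    have := iter_deriv_inv k (s - 1)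
    change deriv^[k] Inv.inv (s - 1) = _
    rw [this, show (-1 - k : ℤ) = -((k + 1 : ℕ) : ℤ) by push_cast; ring, zpow_neg, zpow_natCast]
    ring
  simp only [e3] at e2
  have e4 : LSeries (bc a k) s - (q.totient : ℂ)⁻¹ * (k.factorial / (s - 1) ^ (k + 1))
      = (-1) ^ k * iteratedDeriv k (LFunctionResidueClassAux a) s := by
    rw [e2, ← bc]
    have : ((-1 : ℂ) ^ k) * (-1) ^ k = 1 := by rw [← mul_pow]; simp
    linear_combination (-(LSeries (bc a k) s) + (q.totient : ℂ)⁻¹ * (k.factorial / (s - 1) ^ (k + 1))) * this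
  rw [e4, norm_mul, norm_pow, norm_neg, norm_one, one_pow, one_mul]
  exact h s h1 h2

end PSB

namespace PSB
open Complex Filter Topology MeasureTheory DirichletCharacter FourierTransform SchwartzMap
open ArithmeticFunction.vonMangoldt

/-- the phase -/
noncomputable def ph (ξ y : ℝ) : ℂ := cexp ((2 * Real.pi * ξ * y : ℝ) * I)

lemma norm_ph (ξ y : ℝ) : ‖ph ξ y‖ = 1 := by
  unfold ph; exact Complex.norm_exp_ofReal_mul_I _

lemma continuous_ph : Continuous (fun p : ℝ × ℝ => ph p.1 p.2) := by
  unfold ph; fun_prop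

lemma ph_left (y : ℝ) : Continuous (fun ξ => ph ξ y) := by
  unfold ph; fun_prop

lemma fi (g : 𝓢(ℝ, ℂ)) (y : ℝ) : ∫ ξ : ℝ, ph ξ y * (𝓕 g) ξ = g y := by
  have h : (𝓕⁻ (𝓕 g)) y = g y := by rw [fourierInv_fourier_eq g]
  rw [SchwartzMap.fourierInv_coe, Real.fourierInv_eq'] at h
  rw [← h]
  congr 1
  ext ξ
  simp [ph]
  left
  congr 1
  ring

lemma term_ph (b : ℕ → ℂ) (σ l u ξ : ℝ) (n : ℕ) :
    LSeries.term b σ n * (ph ξ (l * (Real.log n - u))) =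
      ph ξ (-(l * u)) * LSeries.term b (σ - (2 * Real.pi * ξ * l : ℝ) * I) n := by
  rcases eq_or_ne n 0 with rfl | hn
  · simp
  · have hn' : (n : ℂ) ≠ 0 := by exact_mod_cast hn
    rw [LSeries.term_of_ne_zero hn, LSeries.term_of_ne_zero hn, Complex.cpow_sub _ _ hn',
      show (l * (Real.log n - u)) = l * Real.log n + -(l * u) by ring]
    have e : ph ξ (l * Real.log n + -(l * u)) = ph ξ (-(l * u)) * (n : ℂ) ^ (((2 * Real.pi * ξ * l : ℝ) : ℂ) * I) := by
      rw [Complex.cpow_def_of_ne_zero hn', ph, ph, ← Complex.exp_add]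
      congr 1
      rw [← Complex.natCast_log]
      push_cast
      ring
    rw [e]
    field_simp

lemma integrable_ph (g : 𝓢(ℝ, ℂ)) (y : ℝ) : Integrable (fun ξ => ph ξ y * g ξ) := by
  refine g.integrable.norm.mono' (((ph_left y).mul g.continuous).aestronglyMeasurable) ?_
  refine Eventually.of_forall fun ξ => ?_
  rw [norm_mul, norm_ph, one_mul]

lemma sum_formula (g : 𝓢(ℝ, ℂ)) (b : ℕ → ℂ) (σ l u : ℝ) (hb : LSeriesSummable b σ) :
    ∑' n, LSeries.term b σ n * g (l * (Real.log n - u)) =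
      ∫ ξ : ℝ, ph ξ (-(l * u)) * (𝓕 g) ξ * LSeries b (σ - (2 * Real.pi * ξ * l : ℝ) * I) := by
  have h1 : ∀ n : ℕ, Integrable (fun ξ => LSeries.term b σ n * (ph ξ (l * (Real.log n - u)) * (𝓕 g) ξ)) := by
    intro n
    have := integrable_ph (𝓕 g) (l * (Real.log n - u))
    exact this.const_mul (LSeries.term b σ n)
  have h2 : Summable fun n : ℕ => ∫ ξ, ‖LSeries.term b σ n * (ph ξ (l * (Real.log n - u)) * (𝓕 g) ξ)‖ := by
    simp only [norm_mul, norm_ph, one_mul, integral_const_mul]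
    exact hb.norm.mul_right _
  have h := hasSum_integral_of_summable_integral_norm h1 h2
  simp only [integral_const_mul, fi] at h
  rw [h.tsum_eq]
  congr 1
  ext ξ
  rw [LSeries, ← tsum_mul_left]
  congr 1
  ext n
  rw [← mul_assoc, term_ph]
  ring

lemma integrable_L (g : 𝓢(ℝ, ℂ)) (b : ℕ → ℂ) (σ l u : ℝ) (hb : LSeries.abscissaOfAbsConv b < σ) :
    Integrable (fun ξ : ℝ => ph ξ (-(l * u)) * g ξ * LSeries b (σ - (2 * Real.pi * ξ * l : ℝ) * I)) := by
  have hs : LSeriesSummable b σ := LSeriesSummable_of_abscissaOfAbsConv_lt_re (by simpa using hb)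
  have hre : ∀ ξ : ℝ, ((σ : ℂ) - (2 * Real.pi * ξ * l : ℝ) * I).re = σ := by
    intro ξ; simp
  have hc : Continuous (fun ξ : ℝ => LSeries b (σ - (2 * Real.pi * ξ * l : ℝ) * I)) := by
    rw [continuous_iff_continuousAt]
    intro ξ
    have : ContinuousAt (LSeries b) (σ - (2 * Real.pi * ξ * l : ℝ) * I) :=
      ((LSeries_analyticOnNhd b) _ (by rw [Set.mem_ofPred_eq, hre]; exact hb)).continuousAt
    exact ContinuousAt.comp (f := fun ξ : ℝ => (σ : ℂ) - (2 * Real.pi * ξ * l : ℝ) * I) this (by fun_prop)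
  refine (g.integrable.norm.mul_const (∑' n, ‖LSeries.term b σ n‖)).mono'
    (((ph_left _).mul g.continuous).mul hc).aestronglyMeasurable ?_
  refine Eventually.of_forall fun ξ => ?_
  rw [norm_mul, norm_mul, norm_ph, one_mul]
  refine mul_le_mul_of_nonneg_left ?_ (norm_nonneg _)
  have e : ∀ n, ‖LSeries.term b (σ - (2 * Real.pi * ξ * l : ℝ) * I) n‖ = ‖LSeries.term b σ n‖ := by
    intro n
    rw [LSeries.norm_term_eq, LSeries.norm_term_eq, hre, Complex.ofReal_re]
  rw [LSeries]
  refine (norm_tsum_le_tsum_norm ?_).trans ?_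
  · simp only [e]; exact hs.norm
  · simp only [e]; exact le_rfl

lemma int_formula (g : 𝓢(ℝ, ℂ)) (k : ℕ) (σ l u : ℝ) (hσ : 1 < σ) :
    (∫ v in Set.Ioi (0:ℝ), ((v ^ k * Real.exp (-(σ - 1) * v) : ℝ) : ℂ) * g (l * (v - u)) =
      ∫ ξ : ℝ, ph ξ (-(l * u)) * (𝓕 g) ξ * (k.factorial / (σ - (2 * Real.pi * ξ * l : ℝ) * I - 1) ^ (k + 1)))
    ∧ Integrable (fun ξ : ℝ => ph ξ (-(l * u)) * (𝓕 g) ξ * (k.factorial / (σ - (2 * Real.pi * ξ * l : ℝ) * I - 1) ^ (k + 1))) := by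
  have hw := integrable_pow_exp k (c := σ - 1) (by linarith)
  have hI : Integrable (Function.uncurry fun v ξ : ℝ => ((v ^ k * Real.exp (-(σ - 1) * v) : ℝ) : ℂ) *
      (ph ξ (l * (v - u)) * (𝓕 g) ξ)) ((volume.restrict (Set.Ioi 0)).prod volume) := by
    refine ((Integrable.ofReal hw (𝕜 := ℂ)).mul_prod (𝓕 g).integrable).norm.mono' ?_ ?_
    · apply Continuous.aestronglyMeasurable
      have := (𝓕 g).continuous
      unfold ph Function.uncurry
      fun_prop
    · refine Eventually.of_forall fun p => ?_
      simp only [Function.uncurry, norm_mul, norm_ph, one_mul]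
      exact le_rfl
  have key : ∀ ξ : ℝ, ∫ v in Set.Ioi (0:ℝ), ((v ^ k * Real.exp (-(σ - 1) * v) : ℝ) : ℂ) *
      (ph ξ (l * (v - u)) * (𝓕 g) ξ) = ph ξ (-(l * u)) * (𝓕 g) ξ * (k.factorial / (σ - (2 * Real.pi * ξ * l : ℝ) * I - 1) ^ (k + 1)) := by
    intro ξ
    rw [← laplace_pow k (by simpa using hσ), ← integral_const_mul]
    congr 1
    ext v
    rw [show (l * (v - u)) = l * v + -(l * u) by ring]
    have e : ph ξ (l * v + -(l * u)) = ph ξ (-(l * u)) * cexp ((2 * Real.pi * ξ * (l * v) : ℝ) * I) := by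
      rw [ph, ph, ← Complex.exp_add]
      congr 1
      push_cast; ring
    rw [e]
    have e2 : cexp (-(σ - (2 * Real.pi * ξ * l : ℝ) * I - 1) * v) =
        cexp (-(σ - 1) * v) * cexp ((2 * Real.pi * ξ * (l * v) : ℝ) * I) := by
      rw [← Complex.exp_add]
      congr 1
      push_cast; ring
    rw [e2]
    push_cast
    ring
  constructor
  · have h := integral_integral_swap hI
    simp only [key] at h
    rw [← h]
    congr 1
    ext v
    rw [integral_const_mul, fi]
  · have := hI.integral_prod_right
    simp only [Function.uncurry] at this
    simpa only [key] using this

theorem smoothed {q : ℕ} [NeZero q] {a : ZMod q} (ha : IsUnit a) (k : ℕ) (g : 𝓢(ℝ, ℂ)) :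
    ∃ C : ℝ, 0 < C ∧ ∀ σ l u : ℝ, 1 < σ → σ ≤ 2 → 1 ≤ l →
      ‖∑' n, LSeries.term (bc a k) σ n * g (l * (Real.log n - u)) -
        (q.totient : ℂ)⁻¹ * ∫ v in Set.Ioi (0:ℝ),
          ((v ^ k * Real.exp (-(σ - 1) * v) : ℝ) : ℂ) * g (l * (v - u))‖ ≤ C * l := by
  obtain ⟨C, hC, hD⟩ := D_bound ha k
  have i0 : Integrable (fun ξ => ‖(𝓕 g) ξ‖ * (1 + 2 * Real.pi * |ξ|)) := by
    have h1 := (𝓕 g).integrable (μ := volume).norm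
    have h2 := ((𝓕 g).integrable_pow_mul volume 1).const_mul (2 * Real.pi)
    refine (h1.add h2).congr (Eventually.of_forall fun ξ => ?_)
    simp
    ring
  refine ⟨C * (∫ ξ, ‖(𝓕 g) ξ‖ * (1 + 2 * Real.pi * |ξ|)) + 1, ?_, fun σ l u h1 h2 hl => ?_⟩
  · have : 0 ≤ ∫ ξ, ‖(𝓕 g) ξ‖ * (1 + 2 * Real.pi * |ξ|) :=
      integral_nonneg fun ξ => by positivity
    positivity
  have habs : LSeries.abscissaOfAbsConv (bc a k) < σ := by
    rw [bc, LSeries.absicssaOfAbsConv_logPowMul]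
    exact (abscissaOfAbsConv_residueClass_le_one a).trans_lt (by exact_mod_cast h1)
  rw [sum_formula g _ σ l u (LSeriesSummable_of_abscissaOfAbsConv_lt_re (by simpa using habs))]
  obtain ⟨e1, e2⟩ := int_formula g k σ l u h1
  rw [e1, ← integral_const_mul, ← integral_sub (integrable_L (𝓕 g) _ σ l u habs) (e2.const_mul _)]
  have hb : ∀ ξ : ℝ, ‖ph ξ (-(l * u)) * (𝓕 g) ξ * LSeries (bc a k) (σ - (2 * Real.pi * ξ * l : ℝ) * I)
      - (q.totient : ℂ)⁻¹ * (ph ξ (-(l * u)) * (𝓕 g) ξ * (k.factorial / (σ - (2 * Real.pi * ξ * l : ℝ) * I - 1) ^ (k + 1)))‖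
      ≤ C * l * (‖(𝓕 g) ξ‖ * (1 + 2 * Real.pi * |ξ|)) := by
    intro ξ
    have h3 := hD (σ - (2 * Real.pi * ξ * l : ℝ) * I) (by simpa using h1) (by simpa using h2)
    have him : |(σ - (2 * Real.pi * ξ * l : ℝ) * I : ℂ).im| = 2 * Real.pi * |ξ| * l := by
      simp only [sub_im, ofReal_im, mul_im, ofReal_re, I_im, I_re, mul_one, mul_zero, zero_sub, add_zero, abs_neg, abs_mul]
      rw [abs_of_pos Real.pi_pos, abs_of_pos (by linarith : 0 < l), abs_two]
    rw [him] at h3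
    rw [show ∀ p x y z w : ℂ, p * x * y - z * (p * x * w) = p * (x * (y - z * w)) by intros; ring,
      norm_mul, norm_ph, one_mul, norm_mul]
    refine (mul_le_mul_of_nonneg_left h3 (norm_nonneg _)).trans ?_
    have h4 : 1 + 2 * Real.pi * |ξ| * l ≤ l * (1 + 2 * Real.pi * |ξ|) := by linarith
    have h5 := mul_le_mul_of_nonneg_left h4 (mul_nonneg (norm_nonneg ((𝓕 g) ξ)) hC.le)
    linarith
  refine (norm_integral_le_of_norm_le (i0.const_mul (C * l)) (Eventually.of_forall hb)).trans ?_
  rw [integral_const_mul]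
  linarith

end PSB

namespace PSB
open Complex Filter Topology MeasureTheory DirichletCharacter FourierTransform SchwartzMap
open ArithmeticFunction.vonMangoldt

lemma term_real {q : ℕ} (a : ZMod q) (k n : ℕ) (σ : ℝ) :
    LSeries.term (bc a k) σ n = ((residueClass a n * Real.log n ^ k / (n : ℝ) ^ σ : ℝ) : ℂ) := by
  rcases eq_or_ne n 0 with rfl | hn
  · simp
  · rw [LSeries.term_of_ne_zero hn, bc_apply, ofReal_div, Complex.ofReal_cpow (by positivity), mul_comm]
    simp

theorem limit_ineq {q : ℕ} [NeZero q] {a : ZMod q} (ha : IsUnit a) (k : ℕ) (g : ℝ → ℝ)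
    (hg : ContDiff ℝ (⊤ : ℕ∞) g) (hg' : HasCompactSupport g) :
    ∃ C : ℝ, 0 < C ∧ ∀ l u : ℝ, 1 ≤ l → ∀ N : ℕ, (∀ n : ℕ, N ≤ n → g (l * (Real.log n - u)) = 0) →
      |∑ n ∈ Finset.range N, residueClass a n * Real.log n ^ k / n * g (l * (Real.log n - u)) -
        (q.totient : ℝ)⁻¹ * ∫ v in Set.Ioi (0:ℝ), v ^ k * g (l * (v - u))| ≤ C * l := by
  have hgc : ContDiff ℝ (⊤ : ℕ∞) (fun x => (g x : ℂ)) := Complex.ofRealCLM.contDiff.comp hg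
  have hgc' : HasCompactSupport (fun x => (g x : ℂ)) := hg'.comp_left (g := fun x : ℝ => (x : ℂ)) (by simp)
  obtain ⟨C, hC, h⟩ := smoothed ha k (hgc'.toSchwartzMap hgc)
  refine ⟨C, hC, fun l u hl N hN => ?_⟩
  have hl0 : l ≠ 0 := by positivity
  have hint : Integrable (fun v : ℝ => v ^ k * g (l * (v - u))) := by
    refine Continuous.integrable_of_hasCompactSupport ?_ ?_
    · have := hg.continuous; fun_prop
    · have h1 : HasCompactSupport (fun v : ℝ => g (l * (v - u))) := by
        have e : (fun v : ℝ => g (l * (v - u))) = g ∘ ((Homeomorph.subRight u).trans (Homeomorph.mulLeft₀ l hl0)) := by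
          ext v; simp
        rw [e]
        exact hg'.comp_homeomorph _
      exact h1.mul_left
  have key : ∀ σ : ℝ, σ ∈ Set.Ioc 1 2 →
      |∑ n ∈ Finset.range N, residueClass a n * Real.log n ^ k / (n : ℝ) ^ σ * g (l * (Real.log n - u)) -
        (q.totient : ℝ)⁻¹ * ∫ v in Set.Ioi (0:ℝ), v ^ k * Real.exp (-(σ - 1) * v) * g (l * (v - u))| ≤ C * l := by
    intro σ hσ
    have h1 := h σ l u hσ.1 hσ.2 hl
    have e0 : ∀ x, (hgc'.toSchwartzMap hgc) x = (g x : ℂ) := fun x => rfl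
    simp only [e0, term_real] at h1
    rw [tsum_eq_sum (s := Finset.range N)] at h1
    · rw [← Real.norm_eq_abs, ← Complex.norm_real]
      convert h1 using 2
      push_cast
      congr 2
      refine integral_complex_ofReal.symm.trans ?_
      push_cast
      rfl
    · intro n hn
      rw [hN n (by simpa using hn)]
      simp
  have t1 : Tendsto (fun σ : ℝ => ∑ n ∈ Finset.range N, residueClass a n * Real.log n ^ k / (n : ℝ) ^ σ * g (l * (Real.log n - u)))
      (𝓝[>] 1) (𝓝 (∑ n ∈ Finset.range N, residueClass a n * Real.log n ^ k / (n : ℝ) * g (l * (Real.log n - u)))) := by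
    refine tendsto_finsetSum _ fun n _ => ?_
    rcases eq_or_ne n 0 with rfl | hn
    · simp
    · have hn' : (0:ℝ) < n := by positivity
      have h1 : ContinuousAt (fun σ : ℝ => residueClass a n * Real.log n ^ k / (n : ℝ) ^ σ * g (l * (Real.log n - u))) 1 := by
        have h2 : ContinuousAt (fun σ : ℝ => (n : ℝ) ^ σ) 1 := (Real.continuous_const_rpow hn'.ne').continuousAt
        exact (continuousAt_const.div h2 (by positivity)).mul continuousAt_const
      have h3 := h1.tendsto.mono_left (nhdsWithin_le_nhds (s := Set.Ioi 1))
      simpa using h3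
  have t2 : Tendsto (fun σ : ℝ => ∫ v in Set.Ioi (0:ℝ), v ^ k * Real.exp (-(σ - 1) * v) * g (l * (v - u)))
      (𝓝[>] 1) (𝓝 (∫ v in Set.Ioi (0:ℝ), v ^ k * g (l * (v - u)))) := by
    refine tendsto_integral_filter_of_dominated_convergence (fun v => ‖v ^ k * g (l * (v - u))‖) ?_ ?_ ?_ ?_
    · refine Eventually.of_forall fun σ => Continuous.aestronglyMeasurable ?_
      have := hg.continuous; fun_prop
    · filter_upwards [self_mem_nhdsWithin] with σ hσ
      filter_upwards [ae_restrict_mem measurableSet_Ioi] with v hv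
      have hσ' : 1 < σ := hσ
      have hv' : 0 < v := hv
      rw [norm_mul, norm_mul, norm_mul]
      refine mul_le_mul_of_nonneg_right ?_ (norm_nonneg _)
      refine mul_le_of_le_one_right (norm_nonneg _) ?_
      rw [Real.norm_eq_abs, Real.abs_exp]
      exact Real.exp_le_one_iff.2 (by nlinarith)
    · exact hint.norm.integrableOn
    · refine Eventually.of_forall fun v => ?_
      have : Continuous (fun σ : ℝ => v ^ k * Real.exp (-(σ - 1) * v) * g (l * (v - u))) := by fun_prop
      have h3 := (this.continuousAt (x := 1)).tendsto.mono_left (nhdsWithin_le_nhds (s := Set.Ioi 1))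
      simpa using h3
  have t3 := (t1.sub (t2.const_mul ((q.totient : ℝ)⁻¹))).abs
  refine le_of_tendsto t3 ?_
  filter_upwards [Ioc_mem_nhdsGT (show (1:ℝ) < 2 by norm_num)] with σ hσ
  exact key σ hσ

end PSB

namespace PSB
open Filter Topology MeasureTheory
open ArithmeticFunction.vonMangoldt

structure IsBump (c : ℝ) (g : ℝ → ℝ) : Prop where
  smooth : ContDiff ℝ (⊤ : ℕ∞) g
  cpt : HasCompactSupport g
  nn : ∀ x, 0 ≤ g x
  mass : ∫ x, g x = 1
  supp : ∀ x, g x ≠ 0 → c - 1 / 2 < x ∧ x < c + 1 / 2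

lemma exists_bump (c : ℝ) : ∃ g : ℝ → ℝ, IsBump c g := by
  let f : ContDiffBump c := ⟨1 / 8, 1 / 4, by norm_num, by norm_num⟩
  refine ⟨f.normed volume, f.contDiff_normed, f.hasCompactSupport_normed, f.nonneg_normed,
    f.integral_normed, fun x hx => ?_⟩
  have h1 : x ∈ Function.support (f.normed volume) := hx
  rw [f.support_normed_eq, Metric.mem_ball, Real.dist_eq, abs_lt] at h1
  have h2 : f.rOut = 1 / 4 := rfl
  rw [h2] at h1
  constructor <;> linarith [h1.1, h1.2]

/-- scaled kernel -/
noncomputable def ker (g : ℝ → ℝ) (l v u : ℝ) : ℝ := l * g (l * (v - u))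

variable {c : ℝ} {g : ℝ → ℝ}

lemma ker_nn (hg : IsBump c g) {l : ℝ} (hl : 1 ≤ l) (v u : ℝ) : 0 ≤ ker g l v u :=
  mul_nonneg (by linarith) (hg.nn _)

lemma ker_cont_left (hg : IsBump c g) (l v : ℝ) : Continuous (fun u => ker g l v u) := by
  have := hg.smooth.continuous
  unfold ker; fun_prop

lemma ker_cont_right (hg : IsBump c g) (l u : ℝ) : Continuous (fun v => ker g l v u) := by
  have := hg.smooth.continuous
  unfold ker; fun_prop

lemma integral_ker_left (hg : IsBump c g) {l : ℝ} (hl : 1 ≤ l) (v : ℝ) :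
    ∫ u, ker g l v u = 1 := by
  unfold ker
  rw [integral_const_mul, integral_sub_left_eq_self (fun u => g (l * u)) volume v,
    Measure.integral_comp_mul_left, hg.mass, abs_of_pos (by positivity)]
  simp
  field_simp

lemma integral_ker_right (hg : IsBump c g) {l : ℝ} (hl : 1 ≤ l) (u : ℝ) :
    ∫ v, ker g l v u = 1 := by
  unfold ker
  rw [integral_const_mul, integral_sub_right_eq_self (fun v => g (l * v)) u,
    Measure.integral_comp_mul_left, hg.mass, abs_of_pos (by positivity)]
  simp
  field_simp

lemma integrable_ker_left (hg : IsBump c g) {l : ℝ} (hl : 1 ≤ l) (v : ℝ) :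
    Integrable (fun u => ker g l v u) := by
  by_contra h
  have := integral_undef h
  rw [integral_ker_left hg hl] at this
  norm_num at this

lemma integrable_ker_right (hg : IsBump c g) {l : ℝ} (hl : 1 ≤ l) (u : ℝ) :
    Integrable (fun v => ker g l v u) := by
  by_contra h
  have := integral_undef h
  rw [integral_ker_right hg hl] at this
  norm_num at this

lemma ker_pow_integrable (hg : IsBump c g) {l : ℝ} (hl : 1 ≤ l) (u : ℝ) (k : ℕ) :
    Integrable (fun v => v ^ k * ker g l v u) := by
  have hl0 : l ≠ 0 := by positivity
  refine Continuous.integrable_of_hasCompactSupport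
    ((continuous_id.pow k).mul (ker_cont_right hg l u)) ?_
  have h1 : HasCompactSupport (fun v : ℝ => g (l * (v - u))) := by
    have e : (fun v : ℝ => g (l * (v - u))) = g ∘ ((Homeomorph.subRight u).trans (Homeomorph.mulLeft₀ l hl0)) := by
      ext v; simp
    rw [e]
    exact hg.cpt.comp_homeomorph _
  exact (h1.mul_left (f := fun _ => l)).mul_left (f := fun v => v ^ k)

lemma ker_supp (hg : IsBump c g) {l : ℝ} (hl : 1 ≤ l) {v u : ℝ} (h : ker g l v u ≠ 0) :
    (c - 1 / 2) / l < v - u ∧ v - u < (c + 1 / 2) / l := by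
  have hl0 : 0 < l := by linarith
  obtain ⟨h1, h2⟩ := hg.supp _ (right_ne_zero_of_mul h)
  rw [div_lt_iff₀ hl0, lt_div_iff₀ hl0]
  constructor <;> linarith

theorem pw_bound {q : ℕ} [NeZero q] {a : ZMod q} (ha : IsUnit a) (k : ℕ) (hg : IsBump c g) :
    ∃ C : ℝ, 0 < C ∧ ∀ l u : ℝ, 1 ≤ l → ∀ N : ℕ, (∀ n : ℕ, N ≤ n → ker g l (Real.log n) u = 0) →
      |∑ n ∈ Finset.range N, residueClass a n * Real.log n ^ k / n * ker g l (Real.log n) u -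
        (q.totient : ℝ)⁻¹ * ∫ v in Set.Ioi (0:ℝ), v ^ k * ker g l v u| ≤ C * l ^ 2 := by
  obtain ⟨C, hC, h⟩ := limit_ineq ha k g hg.smooth hg.cpt
  refine ⟨C, hC, fun l u hl N hN => ?_⟩
  have hl0 : 0 < l := by linarith
  have h1 := h l u hl N (fun n hn => by
    have := hN n hn
    exact (mul_eq_zero.1 this).resolve_left hl0.ne')
  have e : ∑ n ∈ Finset.range N, residueClass a n * Real.log n ^ k / n * ker g l (Real.log n) u -
        (q.totient : ℝ)⁻¹ * ∫ v in Set.Ioi (0:ℝ), v ^ k * ker g l v u =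
      l * (∑ n ∈ Finset.range N, residueClass a n * Real.log n ^ k / n * g (l * (Real.log n - u)) -
        (q.totient : ℝ)⁻¹ * ∫ v in Set.Ioi (0:ℝ), v ^ k * g (l * (v - u))) := by
    unfold ker
    rw [mul_sub, Finset.mul_sum, mul_left_comm l, ← integral_const_mul l]
    congr 2
    · ext n; ring
    · congr 1
      ext v; ring
  rw [e, abs_mul, abs_of_pos hl0]
  nlinarith

theorem pw_lower {q : ℕ} [NeZero q] {a : ZMod q} (ha : IsUnit a) (k : ℕ) (hg : IsBump (1/2) g) :
    ∃ C : ℝ, 0 < C ∧ ∀ l u : ℝ, 1 ≤ l → 0 ≤ u → ∀ N : ℕ, (∀ n : ℕ, N ≤ n → ker g l (Real.log n) u = 0) →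
      (q.totient : ℝ)⁻¹ * u ^ k - C * l ^ 2 ≤
        ∑ n ∈ Finset.range N, residueClass a n * Real.log n ^ k / n * ker g l (Real.log n) u := by
  obtain ⟨C, hC, h⟩ := pw_bound ha k hg
  refine ⟨C, hC, fun l u hl hu N hN => ?_⟩
  have h1 := (abs_le.1 (h l u hl N hN)).1
  have h2 : u ^ k ≤ ∫ v in Set.Ioi (0:ℝ), v ^ k * ker g l v u := by
    have e : ∫ v in Set.Ioi (0:ℝ), u ^ k * ker g l v u = u ^ k := by
      rw [integral_const_mul, setIntegral_eq_integral_of_forall_compl_eq_zero,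
        integral_ker_right hg hl, mul_one]
      intro v hv
      by_contra h0
      have := (ker_supp hg hl h0).1
      norm_num at this
      apply hv
      exact lt_of_le_of_lt hu this
    rw [← e]
    refine setIntegral_mono ((integrable_ker_right hg hl u).const_mul _).integrableOn
      (ker_pow_integrable hg hl u k).integrableOn fun v => ?_
    by_cases h0 : ker g l v u = 0
    · simp [h0]
    · have := (ker_supp hg hl h0).1
      norm_num at this
      exact mul_le_mul_of_nonneg_right (pow_le_pow_left₀ hu this.le k) (ker_nn hg hl v u)
  have h3 := mul_le_mul_of_nonneg_left h2 (by positivity : 0 ≤ (q.totient : ℝ)⁻¹)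
  linarith

theorem pw_upper {q : ℕ} [NeZero q] {a : ZMod q} (ha : IsUnit a) (k : ℕ) (hg : IsBump (-1/2) g) :
    ∃ C : ℝ, 0 < C ∧ ∀ l u : ℝ, 1 ≤ l → 0 ≤ u → ∀ N : ℕ, (∀ n : ℕ, N ≤ n → ker g l (Real.log n) u = 0) →
        ∑ n ∈ Finset.range N, residueClass a n * Real.log n ^ k / n * ker g l (Real.log n) u
        ≤ (q.totient : ℝ)⁻¹ * u ^ k + C * l ^ 2 := by
  obtain ⟨C, hC, h⟩ := pw_bound ha k hg
  refine ⟨C, hC, fun l u hl hu N hN => ?_⟩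
  have h1 := (abs_le.1 (h l u hl N hN)).2
  have h2 : ∫ v in Set.Ioi (0:ℝ), v ^ k * ker g l v u ≤ u ^ k := by
    have e : ∫ v in Set.Ioi (0:ℝ), u ^ k * ker g l v u ≤ u ^ k := by
      rw [integral_const_mul]
      have := setIntegral_le_integral (s := Set.Ioi 0) (integrable_ker_right hg hl u)
        (Eventually.of_forall fun v => ker_nn hg hl v u)
      rw [integral_ker_right hg hl] at this
      exact mul_le_of_le_one_right (by positivity) this
    refine le_trans ?_ e
    refine setIntegral_mono_on (ker_pow_integrable hg hl u k).integrableOn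
      ((integrable_ker_right hg hl u).const_mul _).integrableOn measurableSet_Ioi fun v hv => ?_
    by_cases h0 : ker g l v u = 0
    · simp [h0]
    · have := (ker_supp hg hl h0).2
      norm_num at this
      exact mul_le_mul_of_nonneg_right (pow_le_pow_left₀ (le_of_lt hv) this.le k) (ker_nn hg hl v u)
  have h3 := mul_le_mul_of_nonneg_left h2 (by positivity : 0 ≤ (q.totient : ℝ)⁻¹)
  linarith

end PSB

namespace PSB
open Filter Topology MeasureTheory
open ArithmeticFunction.vonMangoldt

/-- weight -/
noncomputable def wt (u : ℝ) : ℝ := Real.exp (2 * u) / u ^ 9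

lemma wt_nn {u : ℝ} (hu : 0 ≤ u) : 0 ≤ wt u := by unfold wt; positivity

lemma wt_contOn : ContinuousOn wt (Set.Ici 5) := by
  unfold wt
  refine ContinuousOn.div (by fun_prop) (by fun_prop) fun u hu => ?_
  have : (5:ℝ) ≤ u := hu
  positivity

lemma wt_mono : MonotoneOn wt (Set.Ici 5) := by
  have hd : ∀ u : ℝ, 5 ≤ u → HasDerivAt wt
      ((Real.exp (2 * u) * (2 * 1) * u ^ 9 - Real.exp (2 * u) * ((9 : ℕ) * u ^ (9 - 1))) / (u ^ 9) ^ 2) u := by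
    intro u hu
    have h1 : HasDerivAt (fun u : ℝ => Real.exp (2 * u)) (Real.exp (2 * u) * (2 * 1)) u :=
      ((hasDerivAt_id u).const_mul 2).exp
    exact h1.div (hasDerivAt_pow 9 u) (by positivity)
  refine monotoneOn_of_deriv_nonneg (convex_Ici 5) wt_contOn (fun u hu => ?_) fun u hu => ?_
  · rw [interior_Ici] at hu
    exact (hd u (le_of_lt hu)).differentiableAt.differentiableWithinAt
  · rw [interior_Ici] at hu
    have hu' : 5 < u := hu
    rw [(hd u hu'.le).deriv]
    apply div_nonneg _ (by positivity)
    have : Real.exp (2 * u) * (2 * 1) * u ^ 9 - Real.exp (2 * u) * ((9 : ℕ) * u ^ (9 - 1))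
      = Real.exp (2 * u) * u ^ 8 * (2 * u - 9) := by push_cast; ring
    rw [this]
    have : 0 ≤ 2 * u - 9 := by linarith
    positivity

lemma two_le_of_ne {q : ℕ} {a : ZMod q} {n : ℕ} (h : residueClass a n ≠ 0) : 2 ≤ n := by
  by_contra h2
  have : n = 0 ∨ n = 1 := by omega
  rcases this with rfl | rfl
  · simp at h
  · apply h
    by_cases h3 : ((1:ℕ) : ZMod q) = a <;> simp [residueClass, Set.indicator]

lemma coef_wt {q : ℕ} {a : ZMod q} {n : ℕ} (hn : 2 ≤ n) :
    residueClass a n * Real.log n ^ 8 / n * wt (Real.log n) = residueClass a n * n / Real.log n := by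
  have h1 : (0:ℝ) < n := by positivity
  have h2 : 0 < Real.log n := Real.log_pos (by exact_mod_cast hn)
  have : Real.exp (2 * Real.log n) = (n:ℝ) ^ 2 := by
    rw [two_mul, Real.exp_add, Real.exp_log h1]; ring
  rw [wt, this]
  field_simp

lemma coef_nn {q : ℕ} (a : ZMod q) (n : ℕ) : 0 ≤ residueClass a n * Real.log n ^ 8 / n := by
  have := residueClass_nonneg a n
  have := Real.log_natCast_nonneg n
  positivity

lemma ii_of_contOn {A B : ℝ} (hA : 5 ≤ A) (hAB : A ≤ B) {f : ℝ → ℝ} (hf : ContinuousOn f (Set.Ici 5)) :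
    IntervalIntegrable f volume A B := by
  apply ContinuousOn.intervalIntegrable
  rw [Set.uIcc_of_le hAB]
  exact hf.mono fun x hx => le_trans hA hx.1

theorem lower_sum {q : ℕ} [NeZero q] {a : ZMod q} (ha : IsUnit a) :
    ∃ C : ℝ, 0 < C ∧ ∀ U A l : ℝ, 1 ≤ l → 5 ≤ A → A ≤ U - 1 / l →
      ∫ u in A..(U - 1 / l), wt u * ((q.totient : ℝ)⁻¹ * u ^ 8 - C * l ^ 2) ≤
        ∑ n ∈ Finset.range ⌈Real.exp U⌉₊, residueClass a n * n / Real.log n := by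
  obtain ⟨g, hg⟩ := exists_bump (1 / 2)
  obtain ⟨C, hC, h⟩ := pw_lower ha 8 hg
  refine ⟨C, hC, fun U A l hl hA hAB => ?_⟩
  have hl0 : 0 < l := by linarith
  set N := ⌈Real.exp U⌉₊ with hNdef
  have hN : ∀ u ≤ U - 1 / l, ∀ n : ℕ, N ≤ n → ker g l (Real.log n) u = 0 := by
    intro u hu n hn
    by_contra h0
    have h1 := (ker_supp hg hl h0).2
    have h2 : Real.exp U ≤ n := (Nat.le_ceil _).trans (by exact_mod_cast hn)
    have h3 : U ≤ Real.log n := (Real.le_log_iff_exp_le (lt_of_lt_of_le (Real.exp_pos U) h2)).2 h2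
    norm_num at h1 hu
    linarith
  have hkc : ∀ n : ℕ, ContinuousOn (fun u => wt u * ker g l (Real.log n) u) (Set.Ici 5) := fun n =>
    wt_contOn.mul (ker_cont_left hg l _).continuousOn
  calc ∫ u in A..(U - 1 / l), wt u * ((q.totient : ℝ)⁻¹ * u ^ 8 - C * l ^ 2)
      ≤ ∫ u in A..(U - 1 / l), ∑ n ∈ Finset.range N,
          residueClass a n * Real.log n ^ 8 / n * (wt u * ker g l (Real.log n) u) := by
        refine intervalIntegral.integral_mono_on hAB
          (ii_of_contOn hA hAB (wt_contOn.mul (by fun_prop)))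
          (ii_of_contOn hA hAB (continuousOn_finsetSum _ fun n _ => (hkc n).const_mul _)) fun u hu => ?_
        have h1 := h l u hl (by linarith [hu.1]) N (hN u hu.2)
        have h2 := mul_le_mul_of_nonneg_left h1 (wt_nn (by linarith [hu.1] : 0 ≤ u))
        refine h2.trans (le_of_eq ?_)
        rw [Finset.mul_sum]
        exact Finset.sum_congr rfl fun n _ => by ring
    _ = ∑ n ∈ Finset.range N, residueClass a n * Real.log n ^ 8 / n *
          ∫ u in A..(U - 1 / l), wt u * ker g l (Real.log n) u := by
        rw [intervalIntegral.integral_finsetSum fun n _ =>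
          (ii_of_contOn hA hAB ((hkc n).const_mul _))]
        simp only [intervalIntegral.integral_const_mul]
    _ ≤ _ := by
        refine Finset.sum_le_sum fun n _ => ?_
        by_cases h0 : residueClass a n = 0
        · simp [h0]
        have hn := two_le_of_ne h0
        have hlog : 0 < Real.log n := Real.log_pos (by exact_mod_cast hn)
        rw [← coef_wt hn]
        refine mul_le_mul_of_nonneg_left ?_ (coef_nn a n)
        rcases le_or_gt (Real.log n) A with hv | hv
        · have : ∫ u in A..(U - 1 / l), wt u * ker g l (Real.log n) u = ∫ u in A..(U - 1 / l), (0:ℝ) := by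
            refine intervalIntegral.integral_congr fun u hu => ?_
            rw [Set.uIcc_of_le hAB] at hu
            have : ker g l (Real.log n) u = 0 := by
              by_contra h1
              have h2 := (ker_supp hg hl h1).1
              norm_num at h2
              linarith [hu.1]
            simp [this]
          rw [this]
          simpa using wt_nn hlog.le
        · calc ∫ u in A..(U - 1 / l), wt u * ker g l (Real.log n) u
              ≤ ∫ u in A..(U - 1 / l), wt (Real.log n) * ker g l (Real.log n) u := by
                refine intervalIntegral.integral_mono_on hAB (ii_of_contOn hA hAB (hkc n))
                  ((integrable_ker_left hg hl _).const_mul _).intervalIntegrable fun u hu => ?_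
                by_cases h1 : ker g l (Real.log n) u = 0
                · simp [h1]
                have h2 := (ker_supp hg hl h1).1
                norm_num at h2
                refine mul_le_mul_of_nonneg_right (wt_mono ?_ ?_ h2.le) (ker_nn hg hl _ _)
                · exact le_trans hA hu.1
                · exact le_trans hA hv.le
            _ ≤ wt (Real.log n) := by
                rw [intervalIntegral.integral_const_mul]
                refine mul_le_of_le_one_right (wt_nn hlog.le) ?_
                rw [intervalIntegral.integral_of_le hAB, ← integral_ker_left hg hl (Real.log n)]
                exact setIntegral_le_integral (integrable_ker_left hg hl _)
                  (Eventually.of_forall fun u => ker_nn hg hl _ u)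

theorem upper_sum {q : ℕ} [NeZero q] {a : ZMod q} (ha : IsUnit a) :
    ∃ C : ℝ, 0 < C ∧ ∀ U A l : ℝ, 1 ≤ l → 5 ≤ A → A ≤ U →
        ∑ n ∈ (Finset.range ⌈Real.exp U⌉₊).filter (fun n : ℕ => A ≤ Real.log n), residueClass a n * n / Real.log n
      ≤ ∫ u in A..(U + 1 / l), wt u * ((q.totient : ℝ)⁻¹ * u ^ 8 + C * l ^ 2) := by
  obtain ⟨g, hg⟩ := exists_bump (-1 / 2)
  obtain ⟨C, hC, h⟩ := pw_upper ha 8 hg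
  refine ⟨C, hC, fun U A l hl hA hAU => ?_⟩
  have hl0 : 0 < l := by linarith
  have hl1 : 0 < 1 / l := by positivity
  have hAB : A ≤ U + 1 / l := by linarith
  set N := ⌈Real.exp (U + 1 / l)⌉₊ with hNdef
  have hN : ∀ u ≤ U + 1 / l, ∀ n : ℕ, N ≤ n → ker g l (Real.log n) u = 0 := by
    intro u hu n hn
    by_contra h0
    have h1 := (ker_supp hg hl h0).2
    have h2 : Real.exp (U + 1 / l) ≤ n := (Nat.le_ceil _).trans (by exact_mod_cast hn)
    have h3 : U + 1 / l ≤ Real.log n := (Real.le_log_iff_exp_le (lt_of_lt_of_le (Real.exp_pos _) h2)).2 h2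
    norm_num at h1
    linarith
  have hkc : ∀ n : ℕ, ContinuousOn (fun u => wt u * ker g l (Real.log n) u) (Set.Ici 5) := fun n =>
    wt_contOn.mul (ker_cont_left hg l _).continuousOn
  have hnn : ∀ n : ℕ, 0 ≤ ∫ u in A..(U + 1 / l), wt u * ker g l (Real.log n) u := fun n =>
    intervalIntegral.integral_nonneg hAB fun u hu =>
      mul_nonneg (wt_nn (by linarith [hu.1])) (ker_nn hg hl _ _)
  refine ge_iff_le.1 ?_
  calc ∫ u in A..(U + 1 / l), wt u * ((q.totient : ℝ)⁻¹ * u ^ 8 + C * l ^ 2)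
      ≥ ∫ u in A..(U + 1 / l), ∑ n ∈ Finset.range N,
          residueClass a n * Real.log n ^ 8 / n * (wt u * ker g l (Real.log n) u) := by
        refine intervalIntegral.integral_mono_on hAB
          (ii_of_contOn hA hAB (continuousOn_finsetSum _ fun n _ => (hkc n).const_mul _))
          (ii_of_contOn hA hAB (wt_contOn.mul (by fun_prop))) fun u hu => ?_
        have h1 := h l u hl (by linarith [hu.1]) N (hN u hu.2)
        have h2 := mul_le_mul_of_nonneg_left h1 (wt_nn (by linarith [hu.1] : 0 ≤ u))
        refine le_trans (le_of_eq ?_) h2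
        rw [Finset.mul_sum]
        exact Finset.sum_congr rfl fun n _ => by ring
    _ = ∑ n ∈ Finset.range N, residueClass a n * Real.log n ^ 8 / n *
          ∫ u in A..(U + 1 / l), wt u * ker g l (Real.log n) u := by
        rw [intervalIntegral.integral_finsetSum fun n _ =>
          (ii_of_contOn hA hAB ((hkc n).const_mul _))]
        simp only [intervalIntegral.integral_const_mul]
    _ ≥ ∑ n ∈ (Finset.range ⌈Real.exp U⌉₊).filter (fun n : ℕ => A ≤ Real.log n),
          residueClass a n * Real.log n ^ 8 / n *
          ∫ u in A..(U + 1 / l), wt u * ker g l (Real.log n) u := by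
        refine Finset.sum_le_sum_of_subset_of_nonneg ?_ fun n _ _ => mul_nonneg (coef_nn a n) (hnn n)
        refine (Finset.filter_subset _ _).trans (Finset.range_subset_range.2 ?_)
        exact Nat.ceil_mono (Real.exp_le_exp.2 (by linarith))
    _ ≥ _ := by
        refine Finset.sum_le_sum fun n hn' => ?_
        rw [Finset.mem_filter, Finset.mem_range, Nat.lt_ceil] at hn'
        by_cases h0 : residueClass a n = 0
        · simp [h0]
        have hn := two_le_of_ne h0
        have hlog : 0 < Real.log n := Real.log_pos (by exact_mod_cast hn)
        have hlU : Real.log n < U := (Real.log_lt_iff_lt_exp (by positivity)).2 hn'.1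
        rw [← coef_wt hn]
        refine mul_le_mul_of_nonneg_left ?_ (coef_nn a n)
        have hs : Function.support (fun u => ker g l (Real.log n) u) ⊆ Set.Ioc A (U + 1 / l) := by
          intro u hu
          have h1 := ker_supp hg hl hu
          norm_num at h1
          have e : (-1) / l = - (1 / l) := by ring
          rw [e] at h1
          exact ⟨by linarith [h1.2, hn'.2], by linarith [h1.1]⟩
        calc wt (Real.log n) = ∫ u in A..(U + 1 / l), wt (Real.log n) * ker g l (Real.log n) u := by
                rw [intervalIntegral.integral_const_mul,
                  intervalIntegral.integral_eq_integral_of_support_subset hs,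
                  integral_ker_left hg hl, mul_one]
            _ ≤ ∫ u in A..(U + 1 / l), wt u * ker g l (Real.log n) u := by
                refine intervalIntegral.integral_mono_on hAB
                  ((integrable_ker_left hg hl _).const_mul _).intervalIntegrable
                  (ii_of_contOn hA hAB (hkc n)) fun u hu => ?_
                by_cases h1 : ker g l (Real.log n) u = 0
                · simp [h1]
                have h2 := (ker_supp hg hl h1).2
                norm_num at h2
                refine mul_le_mul_of_nonneg_right (wt_mono ?_ ?_ h2.le) (ker_nn hg hl _ _)
                · exact le_trans hA hn'.2
                · exact le_trans hA hu.1

end PSB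

namespace PSB
open Filter Topology MeasureTheory
open ArithmeticFunction.vonMangoldt

lemma hd_exp2 (u : ℝ) : HasDerivAt (fun u : ℝ => Real.exp (2 * u)) (Real.exp (2 * u) * (2 * 1)) u :=
  ((hasDerivAt_id u).const_mul 2).exp

lemma ei_contOn : ContinuousOn (fun u : ℝ => Real.exp (2 * u) / u) (Set.Ici 5) := by
  refine ContinuousOn.div (by fun_prop) (by fun_prop) fun u hu => ?_
  have : (5:ℝ) ≤ u := hu
  positivity

lemma ei_lower {A B : ℝ} (hA : 5 ≤ A) (hAB : A ≤ B) :
    Real.exp (2 * B) * (1 / (2 * B) + 1 / (4 * B ^ 2)) - Real.exp (2 * A) * (1 / (2 * A) + 1 / (4 * A ^ 2))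
      ≤ ∫ u in A..B, Real.exp (2 * u) / u := by
  have hd : ∀ u : ℝ, 5 ≤ u → HasDerivAt (fun u : ℝ => Real.exp (2 * u) * (1 / (2 * u) + 1 / (4 * u ^ 2)))
      (Real.exp (2 * u) * (1 / u - 1 / (2 * u ^ 3))) u := by
    intro u hu
    have hu0 : u ≠ 0 := by positivity
    have h1 : HasDerivAt (fun u : ℝ => 1 / (2 * u)) (- 1 / (2 * u ^ 2)) u := by
      have := ((hasDerivAt_id u).const_mul 2).fun_inv (by simpa using hu0)
      simp only [one_div]
      refine this.congr_deriv ?_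
      simp only [id]
      field_simp
    have h2 : HasDerivAt (fun u : ℝ => 1 / (4 * u ^ 2)) (- 1 / (2 * u ^ 3)) u := by
      have := ((hasDerivAt_pow 2 u).const_mul 4).fun_inv (by positivity)
      simp only [one_div]
      refine this.congr_deriv ?_
      push_cast
      field_simp
      norm_num
    refine ((hd_exp2 u).fun_mul (h1.fun_add h2)).congr_deriv ?_
    field_simp
    ring
  have hc : ContinuousOn (fun u : ℝ => Real.exp (2 * u) * (1 / u - 1 / (2 * u ^ 3))) (Set.Ici 5) := by
    refine ContinuousOn.mul (by fun_prop) (ContinuousOn.sub ?_ ?_) <;>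
    · refine ContinuousOn.div (by fun_prop) (by fun_prop) fun u hu => ?_
      have : (5:ℝ) ≤ u := hu
      positivity
  rw [← intervalIntegral.integral_eq_sub_of_hasDerivAt (f := fun u : ℝ => Real.exp (2 * u) * (1 / (2 * u) + 1 / (4 * u ^ 2))) (fun u hu => hd u ?_) (ii_of_contOn hA hAB hc)]
  · refine intervalIntegral.integral_mono_on hAB (ii_of_contOn hA hAB hc) (ii_of_contOn hA hAB ei_contOn) fun u hu => ?_
    have : 0 < u := by linarith [hu.1]
    rw [div_eq_mul_one_div (Real.exp (2 * u)) u]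
    refine mul_le_mul_of_nonneg_left ?_ (Real.exp_pos _).le
    have : 0 ≤ 1 / (2 * u ^ 3) := by positivity
    linarith
  · rw [Set.uIcc_of_le hAB] at hu
    linarith [hu.1]

lemma ei_upper {A B : ℝ} (hA : 5 ≤ A) (hAB : A ≤ B) :
    ∫ u in A..B, Real.exp (2 * u) / u ≤ 3 / 5 * (Real.exp (2 * B) / B) := by
  have hd : ∀ u : ℝ, 5 ≤ u → HasDerivAt (fun u : ℝ => 3 / 5 * (Real.exp (2 * u) / u))
      (3 / 5 * ((Real.exp (2 * u) * (2 * 1) * u - Real.exp (2 * u) * 1) / u ^ 2)) u := by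
    intro u hu
    exact (((hd_exp2 u).fun_div (hasDerivAt_id u) (by simp; positivity)).const_mul (3/5))
  have hc : ContinuousOn (fun u : ℝ => 3 / 5 * ((Real.exp (2 * u) * (2 * 1) * u - Real.exp (2 * u) * 1) / u ^ 2)) (Set.Ici 5) := by
    refine ContinuousOn.mul (by fun_prop) ?_
    refine ContinuousOn.div (by fun_prop) (by fun_prop) fun u hu => ?_
    have : (5:ℝ) ≤ u := hu
    positivity
  have := intervalIntegral.integral_eq_sub_of_hasDerivAt (a := A) (b := B) (f := fun u : ℝ => 3 / 5 * (Real.exp (2 * u) / u)) (fun u hu => hd u (by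
    rw [Set.uIcc_of_le hAB] at hu
    linarith [hu.1])) (ii_of_contOn hA hAB hc)
  have h0 : 0 ≤ 3 / 5 * (Real.exp (2 * A) / A) := by positivity
  have h1 : ∫ u in A..B, Real.exp (2 * u) / u ≤ ∫ u in A..B, 3 / 5 * ((Real.exp (2 * u) * (2 * 1) * u - Real.exp (2 * u) * 1) / u ^ 2) := by
    refine intervalIntegral.integral_mono_on hAB (ii_of_contOn hA hAB ei_contOn) (ii_of_contOn hA hAB hc) fun u hu => ?_
    have h5 : 5 ≤ u := by linarith [hu.1]
    have : 0 < u := by linarith [hu.1]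
    have e : 3 / 5 * ((Real.exp (2 * u) * (2 * 1) * u - Real.exp (2 * u) * 1) / u ^ 2)
      - Real.exp (2 * u) / u = Real.exp (2 * u) / u ^ 2 * ((u - 3) / 5) := by
      field_simp; ring
    have : 0 ≤ Real.exp (2 * u) / u ^ 2 * ((u - 3) / 5) := by
      have : 0 ≤ u - 3 := by linarith
      positivity
    linarith
  linarith

lemma err_bound {A B C : ℝ} (hA : 5 ≤ A) (hAB : A ≤ B) (hC : 0 ≤ C) :
    ∫ u in A..B, wt u * C ≤ (B - A) * (wt B * C) := by
  have : ∫ u in A..B, wt u * C ≤ ∫ u in A..B, wt B * C := by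
    refine intervalIntegral.integral_mono_on hAB
      (ii_of_contOn hA hAB (wt_contOn.mul (by fun_prop))) (by simp) fun u hu => ?_
    refine mul_le_mul_of_nonneg_right (wt_mono ?_ ?_ hu.2) hC
    · exact le_trans hA hu.1
    · exact le_trans hA hAB
  rw [intervalIntegral.integral_const, smul_eq_mul] at this
  exact this

lemma int_split {A B c D : ℝ} (hA : 5 ≤ A) (hAB : A ≤ B) :
    ∫ u in A..B, wt u * (c * u ^ 8 + D) = c * (∫ u in A..B, Real.exp (2 * u) / u) + ∫ u in A..B, wt u * D := by
  rw [← intervalIntegral.integral_const_mul, ← intervalIntegral.integral_add]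
  · refine intervalIntegral.integral_congr fun u hu => ?_
    rw [Set.uIcc_of_le hAB] at hu
    have : 0 < u := by linarith [hu.1]
    simp only [wt]
    field_simp
  · exact ii_of_contOn hA hAB (ei_contOn.const_mul _)
  · exact ii_of_contOn hA hAB (wt_contOn.mul (by fun_prop))

theorem lower_main {q : ℕ} [NeZero q] {a : ZMod q} (ha : IsUnit a) :
    ∃ C : ℝ, 0 < C ∧ ∀ U : ℝ, 20 ≤ U →
      (q.totient : ℝ)⁻¹ * (Real.exp (2 * U) * (1 - 2 / U ^ 2) * (1 / (2 * U) + 1 / (4 * U ^ 2)) - Real.exp U)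
        - C * Real.exp (2 * U) / U ^ 4 ≤
        ∑ n ∈ Finset.range ⌈Real.exp U⌉₊, residueClass a n * n / Real.log n := by
  obtain ⟨C, hC, h⟩ := lower_sum ha
  refine ⟨C, hC, fun U hU => ?_⟩
  have hU2 : 400 ≤ U ^ 2 := by nlinarith
  have hU0 : 0 < U := by linarith
  have hi : 1 / U ^ 2 ≤ 1 := by rw [div_le_one (by positivity)]; linarith
  have hi0 : 0 < 1 / U ^ 2 := by positivity
  have hA : 5 ≤ U / 2 := by linarith
  have hAB : U / 2 ≤ U - 1 / U ^ 2 := by linarith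
  refine le_trans ?_ (h U (U / 2) (U ^ 2) (by linarith) hA hAB)
  simp only [sub_eq_add_neg (_ * _ ^ 8)]
  rw [int_split hA hAB]
  have h1 := ei_lower hA hAB
  have h2 := err_bound (C := C * (U ^ 2) ^ 2) hA hAB (by positivity)
  set B := U - 1 / U ^ 2 with hB
  have hB5 : 5 ≤ B := hA.trans hAB
  have h3 : wt B ≤ wt U := wt_mono hB5 (by show 5 ≤ U; linarith) (by linarith)
  have h4 : (B - U / 2) * (wt B * (C * (U ^ 2) ^ 2)) ≤ C * Real.exp (2 * U) / U ^ 4 := by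
    calc _ ≤ U * (wt U * (C * (U ^ 2) ^ 2)) := by
          have := wt_nn (by linarith : 0 ≤ B)
          gcongr
          linarith
      _ = _ := by unfold wt; field_simp
  have h5 : ∫ u in (U/2)..B, wt u * -(C * (U ^ 2) ^ 2) = - ∫ u in (U/2)..B, wt u * (C * (U ^ 2) ^ 2) := by
    rw [← intervalIntegral.integral_neg]; simp
  rw [h5]
  have h6 : Real.exp (2 * U) * (1 - 2 / U ^ 2) * (1 / (2 * U) + 1 / (4 * U ^ 2)) ≤
      Real.exp (2 * B) * (1 / (2 * B) + 1 / (4 * B ^ 2)) := by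
    have e : Real.exp (2 * B) = Real.exp (2 * U) * Real.exp (- (2 / U ^ 2)) := by
      rw [← Real.exp_add]; congr 1; rw [hB]; ring
    have := Real.add_one_le_exp (- (2 / U ^ 2))
    have hBU : B ≤ U := by linarith
    have hB0 : 0 < B := by linarith
    rw [e]
    gcongr
    linarith
  have h7 : Real.exp (2 * (U / 2)) * (1 / (2 * (U / 2)) + 1 / (4 * (U / 2) ^ 2)) ≤ Real.exp U := by
    rw [mul_div_cancel₀ U (two_ne_zero)]
    refine mul_le_of_le_one_right (Real.exp_pos _).le ?_
    have : 1 / U ≤ 1 / 20 := by gcongr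
    have e : 4 * (U / 2) ^ 2 = U ^ 2 := by ring
    have : 1 / U ^ 2 ≤ 1 / 400 := by gcongr
    rw [e]; linarith
  have h8 : (q.totient : ℝ)⁻¹ * (Real.exp (2 * U) * (1 - 2 / U ^ 2) * (1 / (2 * U) + 1 / (4 * U ^ 2)) - Real.exp U)
     ≤ (q.totient : ℝ)⁻¹ * ∫ u in (U/2)..B, Real.exp (2 * u) / u := by
    refine mul_le_mul_of_nonneg_left ?_ (by positivity)
    linarith
  linarith

theorem upper_main {q : ℕ} [NeZero q] {a : ZMod q} (ha : IsUnit a) :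
    ∃ C : ℝ, 0 < C ∧ ∀ U : ℝ, 20 ≤ U →
      ∑ n ∈ (Finset.range ⌈Real.exp U⌉₊).filter (fun n : ℕ => U / 2 ≤ Real.log n), residueClass a n * n / Real.log n
       ≤ (q.totient : ℝ)⁻¹ * (18 / 25 * (Real.exp (2 * U) / U)) + C * Real.exp (2 * U) / U ^ 4 := by
  obtain ⟨C, hC, h⟩ := upper_sum ha
  refine ⟨2 * C, by positivity, fun U hU => ?_⟩
  have hU2 : 400 ≤ U ^ 2 := by nlinarith
  have hU0 : 0 < U := by linarith
  have hi : 1 / U ^ 2 ≤ 1 / 400 := by gcongr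
  have hi0 : 0 < 1 / U ^ 2 := by positivity
  have hA : 5 ≤ U / 2 := by linarith
  have hAB : U / 2 ≤ U + 1 / U ^ 2 := by linarith
  refine le_trans (h U (U / 2) (U ^ 2) (by linarith) hA (by linarith)) ?_
  rw [int_split hA hAB]
  have h1 := ei_upper hA hAB
  have h2 := err_bound (C := C * (U ^ 2) ^ 2) hA hAB (by positivity)
  set B := U + 1 / U ^ 2 with hB
  have hBU : U ≤ B := by linarith
  have e : Real.exp (2 * B) ≤ Real.exp (2 * U) * (6 / 5) := by
    have e : Real.exp (2 * B) = Real.exp (2 * U) * Real.exp (2 / U ^ 2) := by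
      rw [← Real.exp_add]; congr 1; rw [hB]; ring
    rw [e]
    gcongr
    have h3 := Real.add_one_le_exp (- (2 / U ^ 2))
    have e2 : 2 / U ^ 2 = 2 * (1 / U ^ 2) := by ring
    have h4 : (199:ℝ) / 200 ≤ Real.exp (- (2 / U ^ 2)) := by linarith
    rw [Real.exp_neg] at h4
    rw [le_inv_comm₀ (by norm_num) (Real.exp_pos _)] at h4
    norm_num at h4 ⊢
    linarith
  have h3 : wt B ≤ Real.exp (2 * U) * (6 / 5) / U ^ 9 := by
    unfold wt
    gcongr
  have h4 : (B - U / 2) * (wt B * (C * (U ^ 2) ^ 2)) ≤ 2 * C * Real.exp (2 * U) / U ^ 4 := by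
    calc _ ≤ U * ((Real.exp (2 * U) * (6 / 5) / U ^ 9) * (C * (U ^ 2) ^ 2)) := by
          have := wt_nn (by linarith : 0 ≤ B)
          gcongr
          linarith
      _ = 6 / 5 * (C * Real.exp (2 * U) / U ^ 4) := by field_simp
      _ ≤ 2 * (C * Real.exp (2 * U) / U ^ 4) := by gcongr; norm_num
      _ = _ := by ring
  have h5 : 3 / 5 * (Real.exp (2 * B) / B) ≤ 18 / 25 * (Real.exp (2 * U) / U) := by
    calc _ ≤ 3 / 5 * (Real.exp (2 * U) * (6 / 5) / U) := by gcongr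
      _ = _ := by ring
  have h8 : (q.totient : ℝ)⁻¹ * (∫ u in (U/2)..B, Real.exp (2 * u) / u) ≤ (q.totient : ℝ)⁻¹ * (18 / 25 * (Real.exp (2 * U) / U)) := 
    mul_le_mul_of_nonneg_left (h1.trans h5) (by positivity)
  linarith

end PSB

namespace PSB
open Filter Topology MeasureTheory
open ArithmeticFunction.vonMangoldt

lemma rc_prime {q : ℕ} {a p : ℕ} (hp : p.Prime) (h : p % q = a % q) :
    residueClass (a : ZMod q) p * p / Real.log p = p := by
  have h1 : (p : ZMod q) = a := (ZMod.natCast_eq_natCast_iff' _ _ _).2 h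
  have h2 : 0 < Real.log p := Real.log_pos (by exact_mod_cast hp.one_lt)
  have : residueClass (a : ZMod q) p = Real.log p := by
    simp [residueClass, Set.indicator, h1, ArithmeticFunction.vonMangoldt_apply_prime hp]
  rw [this]
  field_simp

lemma term_nn {q : ℕ} (a : ZMod q) (n : ℕ) : 0 ≤ residueClass a n * n / Real.log n := by
  have := residueClass_nonneg a n
  have := Real.log_natCast_nonneg n
  positivity

lemma sum_upper {q : ℕ} (a : ℕ) {U : ℝ} (hU : 0 ≤ U) :
    primeSumBelowMod (Real.exp U) a q ≤
      ∑ n ∈ (Finset.range ⌈Real.exp U⌉₊).filter (fun n : ℕ => U / 2 ≤ Real.log n),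
        residueClass (a : ZMod q) n * n / Real.log n + 2 * Real.exp U := by
  unfold primeSumBelowMod
  rw [← Finset.sum_filter_add_sum_filter_not _ (fun n : ℕ => U / 2 ≤ Real.log n)]
  refine add_le_add ?_ ?_
  · calc _ = ∑ n ∈ Finset.filter (fun n : ℕ => U / 2 ≤ Real.log n) (Finset.filter (fun p => Nat.Prime p ∧ p % q = a % q) (Finset.range ⌈Real.exp U⌉₊)), residueClass (a : ZMod q) n * n / Real.log n := by
          refine Finset.sum_congr rfl fun n hn => ?_
          simp only [Finset.mem_filter] at hn
          exact (rc_prime hn.1.2.1 hn.1.2.2).symm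
      _ ≤ _ := by
          refine Finset.sum_le_sum_of_subset_of_nonneg ?_ fun n _ _ => term_nn _ n
          intro n hn
          simp only [Finset.mem_filter] at hn ⊢
          exact ⟨hn.1.1, hn.2⟩
  · have hlt : ∀ n ∈ Finset.filter (fun n : ℕ => ¬ U / 2 ≤ Real.log n) (Finset.filter (fun p => Nat.Prime p ∧ p % q = a % q) (Finset.range ⌈Real.exp U⌉₊)), (n : ℝ) < Real.exp (U / 2) := by
      intro n hn
      simp only [Finset.mem_filter, not_le] at hn
      exact (Real.log_lt_iff_lt_exp (by exact_mod_cast hn.1.2.1.pos)).1 hn.2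
    have hE : 1 ≤ Real.exp (U / 2) := Real.one_le_exp (by linarith)
    have hEE : Real.exp (U / 2) * Real.exp (U / 2) = Real.exp U := by
      rw [← Real.exp_add]; ring_nf
    refine (Finset.sum_le_card_nsmul _ _ (Real.exp (U / 2)) fun n hn => (hlt n hn).le).trans ?_
    have hc := Finset.card_le_card (s := Finset.filter (fun n : ℕ => ¬ U / 2 ≤ Real.log n) (Finset.filter (fun p => Nat.Prime p ∧ p % q = a % q) (Finset.range ⌈Real.exp U⌉₊))) (t := Finset.range ⌈Real.exp (U / 2)⌉₊) (by
      intro n hn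
      rw [Finset.mem_range, Nat.lt_ceil]
      exact hlt n hn)
    rw [Finset.card_range] at hc
    have hc2 : (⌈Real.exp (U / 2)⌉₊ : ℝ) < Real.exp (U / 2) + 1 := Nat.ceil_lt_add_one (by positivity)
    rw [nsmul_eq_mul]
    have hc3 : ((Finset.filter (fun n : ℕ => ¬ U / 2 ≤ Real.log n) (Finset.filter (fun p => Nat.Prime p ∧ p % q = a % q) (Finset.range ⌈Real.exp U⌉₊))).card : ℝ) ≤ 2 * Real.exp (U / 2) := by
      have : ((Finset.filter (fun n : ℕ => ¬ U / 2 ≤ Real.log n) (Finset.filter (fun p => Nat.Prime p ∧ p % q = a % q) (Finset.range ⌈Real.exp U⌉₊))).card : ℝ) ≤ (⌈Real.exp (U / 2)⌉₊ : ℝ) := by exact_mod_cast hc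
      linarith
    calc _ ≤ 2 * Real.exp (U / 2) * Real.exp (U / 2) := mul_le_mul_of_nonneg_right hc3 (by positivity)
      _ = _ := by rw [mul_assoc, hEE]

lemma sum_lower {q : ℕ} (a : ℕ) {U : ℝ} (hU : 0 ≤ U) :
      ∑ n ∈ Finset.range ⌈Real.exp U⌉₊, residueClass (a : ZMod q) n * n / Real.log n ≤
    primeSumBelowMod (Real.exp U) a q + 4 * U * Real.exp (3 / 2 * U) := by
  have hpow : ∀ n ∈ Finset.range ⌈Real.exp U⌉₊,
      residueClass (a : ZMod q) n * n / Real.log n ≤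
       (if Nat.Prime n ∧ n % q = a % q then (n:ℝ) else 0) +
        2 * Real.exp U * (if ¬ n.Prime ∧ 0 < n then ArithmeticFunction.vonMangoldt n else 0) := by
    intro n hn
    rw [Finset.mem_range, Nat.lt_ceil] at hn
    have hv := ArithmeticFunction.vonMangoldt_nonneg (n := n)
    by_cases h0 : residueClass (a : ZMod q) n = 0
    · rw [h0]
      simp only [zero_mul, zero_div]
      refine add_nonneg (by split_ifs <;> positivity) (mul_nonneg (by positivity) (by split_ifs <;> simp [hv]))
    have hn2 := two_le_of_ne h0
    have hr : n % q = a % q := by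
      rw [← ZMod.natCast_eq_natCast_iff']
      by_contra h
      exact h0 (by simp [residueClass, Set.indicator, h])
    by_cases hp : n.Prime
    · rw [rc_prime hp hr]
      simp [hp, hr]
    · have h3 : residueClass (a : ZMod q) n ≤ ArithmeticFunction.vonMangoldt n := residueClass_le _ n
      simp only [hp, false_and, if_false, zero_add, not_false_eq_true, true_and, if_pos (by omega : 0 < n)]
      have hl : 1 / 2 ≤ Real.log n := by
        have := Real.log_two_gt_d9
        have : Real.log 2 ≤ Real.log n := Real.log_le_log (by norm_num) (by exact_mod_cast hn2)
        linarith
      rw [div_le_iff₀ (by linarith)]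
      have h4 : residueClass (a : ZMod q) n * n ≤ ArithmeticFunction.vonMangoldt n * Real.exp U :=
        mul_le_mul h3 hn.le (by positivity) hv
      have h5 : 0 ≤ ArithmeticFunction.vonMangoldt n * Real.exp U := by positivity
      nlinarith
  refine (Finset.sum_le_sum hpow).trans ?_
  rw [Finset.sum_add_distrib, ← Finset.sum_filter, ← Finset.mul_sum]
  unfold primeSumBelowMod
  have h1 : 1 ≤ Real.exp U := Real.one_le_exp hU
  have hps := Chebyshev.psi_sub_theta_le h1
  rw [Chebyshev.psi_sub_theta_eq_sum_not_prime, Real.log_exp] at hps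
  have hle : ∑ n ∈ Finset.range ⌈Real.exp U⌉₊, (if ¬ n.Prime ∧ 0 < n then ArithmeticFunction.vonMangoldt n else 0)
      ≤ 2 * √(Real.exp U) * U := by
    refine le_trans ?_ hps
    rw [← Finset.sum_filter]
    refine Finset.sum_le_sum_of_subset_of_nonneg ?_ fun n _ _ => ArithmeticFunction.vonMangoldt_nonneg
    intro n hn
    simp only [Finset.mem_filter, Finset.mem_range, Nat.lt_ceil, Finset.mem_Ioc] at hn ⊢
    exact ⟨⟨hn.2.2, Nat.le_floor hn.1.le⟩, hn.2.1⟩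
  have hs : Real.exp U * √(Real.exp U) = Real.exp (3 / 2 * U) := by
    rw [← Real.exp_half, ← Real.exp_add]; ring_nf
  have := mul_le_mul_of_nonneg_left hle (by positivity : 0 ≤ 2 * Real.exp U)
  have e : 2 * Real.exp U * (2 * √(Real.exp U) * U) = 4 * U * Real.exp (3 / 2 * U) := by
    rw [← hs]; ring
  linarith

lemma tp (n : ℕ) {b : ℝ} (hb : 0 < b) : Tendsto (fun U : ℝ => U ^ n * Real.exp (-b * U)) atTop (𝓝 0) := by
  have := Real.tendsto_pow_mul_exp_neg_atTop_nhds_zero n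
  have h2 := (this.comp (tendsto_id.const_mul_atTop hb)).const_mul ((b ^ n)⁻¹)
  simp only [mul_zero] at h2
  refine h2.congr fun U => ?_
  simp only [Function.comp, id, mul_pow, neg_mul]
  field_simp

lemma ti (n : ℕ) (hn : n ≠ 0) : Tendsto (fun U : ℝ => 1 / U ^ n) atTop (𝓝 0) := by
  simp only [one_div]
  exact (tendsto_pow_atTop hn).inv_tendsto_atTop

lemma final_lower {k C : ℝ} (hk : 0 < k) : ∀ᶠ U : ℝ in atTop,
    k * (Real.exp (2 * U) / (2 * U)) ≤
      k * (Real.exp (2 * U) * (1 - 2 / U ^ 2) * (1 / (2 * U) + 1 / (4 * U ^ 2)) - Real.exp U)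
        - C * Real.exp (2 * U) / U ^ 4 - 4 * U * Real.exp (3 / 2 * U) := by
  have ht : Tendsto (fun U : ℝ => k * (1 / 4 - (1 / U ^ 1 + 1 / 2 * (1 / U ^ 2)) - U ^ 2 * Real.exp (- 1 * U))
      - C * (1 / U ^ 2) - 4 * (U ^ 3 * Real.exp (-(1/2) * U))) atTop
      (𝓝 (k * (1 / 4 - (0 + 1 / 2 * 0) - 0) - C * 0 - 4 * 0)) :=
    (((tendsto_const_nhds.sub ((ti 1 (by norm_num)).add ((ti 2 (by norm_num)).const_mul _))).sub
      (tp 2 one_pos)).const_mul k |>.sub ((ti 2 (by norm_num)).const_mul C)).sub ((tp 3 (by norm_num)).const_mul 4)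
  have hpos := ht.eventually (lt_mem_nhds (show (0:ℝ) < _ by norm_num; exact hk))
  filter_upwards [hpos, eventually_gt_atTop 0] with U h hU
  have e1 : Real.exp U = Real.exp (2 * U) * Real.exp (-1 * U) := by rw [← Real.exp_add]; ring_nf
  have e2 : Real.exp (3 / 2 * U) = Real.exp (2 * U) * Real.exp (-(1/2) * U) := by rw [← Real.exp_add]; ring_nf
  have h2 : 0 ≤ Real.exp (2 * U) / U ^ 2 * (k * (1 / 4 - (1 / U ^ 1 + 1 / 2 * (1 / U ^ 2)) - U ^ 2 * Real.exp (- 1 * U))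
      - C * (1 / U ^ 2) - 4 * (U ^ 3 * Real.exp (-(1/2) * U))) := by positivity
  rw [e1, e2]
  rw [← sub_nonneg]
  refine h2.trans (le_of_eq ?_)
  field_simp
  ring

lemma final_upper {k C : ℝ} (hk : 0 < k) : ∀ᶠ U : ℝ in atTop,
    k * (18 / 25 * (Real.exp (2 * U) / U)) + C * Real.exp (2 * U) / U ^ 4 + 2 * Real.exp U ≤
      k * (Real.exp (2 * U) / U) := by
  have ht : Tendsto (fun U : ℝ => k * (7 / 25) - C * (1 / U ^ 3) - 2 * (U ^ 1 * Real.exp (-1 * U))) atTop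
      (𝓝 (k * (7 / 25) - C * 0 - 2 * 0)) :=
    (tendsto_const_nhds.sub ((ti 3 (by norm_num)).const_mul C)).sub ((tp 1 one_pos).const_mul 2)
  have hpos := ht.eventually (lt_mem_nhds (show (0:ℝ) < _ by norm_num; exact hk))
  filter_upwards [hpos, eventually_gt_atTop 0] with U h hU
  have e1 : Real.exp U = Real.exp (2 * U) * Real.exp (-1 * U) := by rw [← Real.exp_add]; ring_nf
  have h2 : 0 ≤ Real.exp (2 * U) / U * (k * (7 / 25) - C * (1 / U ^ 3) - 2 * (U ^ 1 * Real.exp (-1 * U))) := by positivity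
  rw [e1]
  rw [← sub_nonneg]
  refine h2.trans (le_of_eq ?_)
  field_simp
  ring

lemma bounds_one (δ : ℕ) (hδ : 1 ≤ δ) (a : ℕ) (h : Nat.gcd a δ = 1) : ∀ᶠ x : ℝ in atTop,
    x ^ 2 / (2 * (Nat.totient δ : ℝ) * Real.log x) ≤ primeSumBelowMod x a δ ∧
      primeSumBelowMod x a δ ≤ x ^ 2 / ((Nat.totient δ : ℝ) * Real.log x) := by
  have : NeZero δ := ⟨by omega⟩
  have hu : IsUnit (a : ZMod δ) := (ZMod.isUnit_iff_coprime a δ).2 h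
  have hk : 0 < (δ.totient : ℝ)⁻¹ := by
    have := Nat.totient_pos.2 hδ
    positivity
  obtain ⟨C, -, hC⟩ := lower_main hu
  obtain ⟨D, -, hD⟩ := upper_main hu
  have ev := (final_lower (C := C) hk).and ((final_upper (C := D) hk).and (eventually_ge_atTop 20))
  filter_upwards [Real.tendsto_log_atTop.eventually ev, eventually_gt_atTop 0] with x hx hx0
  obtain ⟨h1, h2, h3⟩ := hx
  have h4 := hC _ h3
  have h5 := hD _ h3
  have h6 := sum_lower (q := δ) a (by linarith : 0 ≤ Real.log x)
  have h7 := sum_upper (q := δ) a (by linarith : 0 ≤ Real.log x)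
  have e2 : Real.exp (2 * Real.log x) = x ^ 2 := by
    rw [two_mul, Real.exp_add, Real.exp_log hx0]; ring
  rw [Real.exp_log hx0] at h1 h2 h4 h5 h6 h7
  rw [e2] at h1 h2 h4 h5
  constructor
  · have : x ^ 2 / (2 * (Nat.totient δ : ℝ) * Real.log x) = (δ.totient : ℝ)⁻¹ * (x ^ 2 / (2 * Real.log x)) := by
      field_simp
    rw [this]
    linarith
  · have : x ^ 2 / ((Nat.totient δ : ℝ) * Real.log x) = (δ.totient : ℝ)⁻¹ * (x ^ 2 / Real.log x) := by
      field_simp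
    rw [this]
    linarith

end PSB

/-- For `δ ≥ 1` there is `x₀` (depending only on `δ`) such that for every `a ≥ 1`
coprime to `δ` and every `x ≥ x₀`,
`x²/(2 φ(δ) log x) ≤ Σ_{p ≡ a (δ), p < x} p ≤ x²/(φ(δ) log x)`. -/
theorem primeSumBelowMod_bounds (δ : ℕ) (hδ : 1 ≤ δ) :
    ∃ x₀ : ℝ, ∀ a : ℕ, 1 ≤ a → Nat.gcd a δ = 1 → ∀ x : ℝ, x₀ ≤ x →
      x ^ 2 / (2 * (Nat.totient δ : ℝ) * Real.log x) ≤ primeSumBelowMod x a δ ∧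
      primeSumBelowMod x a δ ≤ x ^ 2 / ((Nat.totient δ : ℝ) * Real.log x) := by
  have h : ∀ᶠ x : ℝ in Filter.atTop, ∀ b ∈ (Finset.range δ).filter (fun b => Nat.gcd b δ = 1),
      x ^ 2 / (2 * (Nat.totient δ : ℝ) * Real.log x) ≤ primeSumBelowMod x b δ ∧
      primeSumBelowMod x b δ ≤ x ^ 2 / ((Nat.totient δ : ℝ) * Real.log x) := by
    rw [Filter.eventually_all_finset]
    intro b hb
    exact PSB.bounds_one δ hδ b (Finset.mem_filter.1 hb).2
  obtain ⟨x₀, hx₀⟩ := Filter.eventually_atTop.1 h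
  refine ⟨x₀, fun a _ hg x hx => ?_⟩
  have e : primeSumBelowMod x a δ = primeSumBelowMod x (a % δ) δ := by
    simp [primeSumBelowMod]
  rw [e]
  refine hx₀ x hx _ (Finset.mem_filter.2 ⟨Finset.mem_range.2 (Nat.mod_lt _ (by omega)), ?_⟩)
  rw [← Nat.gcd_rec, Nat.gcd_comm]
  exact hg
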